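/- arXiv:1110.0255 — 6 statements merged into one kernel-verified Lean document; each statement's English description precedes it below -/
import Mathlib

section
/- Let K be a number field and S : Emb(K) → ℤ. Then the following are equivalent: (i) the character θ^S is balanced, i.e. for every complex conjugation c′ (an automorphism of ℂ of the form g⁻¹∘c∘g with c the standard complex conjugation and g a field automorphism of ℂ) there is an integer a such that S(c′∘σ) + S(σ) = a for every σ ∈ Emb(K); (ii) for every unit u of the ring of integers 𝓞_K, the complex number θ^S(u) = ∏_{σ ∈ Emb(K)} σ(u)^{S(σ)} is a root of unity (there exists m ≥ 1 with θ^S(u)^m = 1). -/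
open NumberField

/-- A *complex conjugation* is an automorphism of `ℂ` of the form `g⁻¹ ∘ c ∘ g`
where `c` is the standard complex conjugation and `g` is any field automorphism of `ℂ`. -/
noncomputable def complexConjugation (g : ℂ ≃+* ℂ) : ℂ ≃+* ℂ :=
  g.trans ((starRingAut : ℂ ≃+* ℂ).trans g.symm)


open NumberField.InfinitePlace NumberField.Units NumberField.Units.dirichletUnitTheorem

theorem exists_ringEquiv_extending {R K L : Type} [Field R] [Field K] [Field L] [Algebra R K]
    [Algebra R L] [IsAlgClosed K] [IsAlgClosed L] (hR : Cardinal.mk R ≤ Cardinal.aleph0)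
    (hK : Cardinal.aleph0 < Cardinal.mk K) (hKL : Cardinal.mk K = Cardinal.mk L) :
    ∃ g : K ≃+* L, ∀ r : R, g (algebraMap R K r) = algebraMap R L r := by
  obtain ⟨s, hv⟩ := exists_isTranscendenceBasis R K
  obtain ⟨t, hw⟩ := exists_isTranscendenceBasis R L
  have h1 := IsAlgClosed.cardinal_eq_cardinal_transcendence_basis_of_aleph0_lt' _ hv hR hK
  have h2 := IsAlgClosed.cardinal_eq_cardinal_transcendence_basis_of_aleph0_lt' _ hw hR (hKL ▸ hK)
  obtain ⟨e⟩ := Cardinal.eq.1 (h1.symm.trans (hKL.trans h2))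
  letI := IsAlgClosed.isAlgClosure_of_transcendence_basis _ hv
  letI := IsAlgClosed.isAlgClosure_of_transcendence_basis _ hw
  let E := (hv.1.aevalEquiv.symm.trans (MvPolynomial.renameEquiv R e)).trans hw.1.aevalEquiv
  refine ⟨IsAlgClosure.equivOfEquiv K L E.toRingEquiv, fun r => ?_⟩
  rw [IsScalarTower.algebraMap_apply R (Algebra.adjoin R (Set.range ((↑) : s → K))) K,
    IsAlgClosure.equivOfEquiv_algebraMap]
  have : E.toRingEquiv (algebraMap R _ r) = algebraMap R _ r := E.commutes r
  rw [this, ← IsScalarTower.algebraMap_apply]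

theorem exists_aut_extending {F : Type} [Field F] (hF : Cardinal.mk F ≤ Cardinal.aleph0)
    (i f : F →+* ℂ) : ∃ g : ℂ ≃+* ℂ, ∀ x, g (i x) = f x := by
  have hc : Cardinal.aleph0 < Cardinal.mk ℂ := by
    rw [Cardinal.mk_complex]; exact Cardinal.aleph0_lt_continuum
  exact @exists_ringEquiv_extending F ℂ ℂ _ _ _ i.toAlgebra f.toAlgebra _ _ hF hc rfl

/-- Kronecker, via automorphisms of `ℂ`. -/
theorem kronecker_aut (z : ℂ) (hz : IsIntegral ℤ z) (h : ∀ g : ℂ ≃+* ℂ, ‖g z‖ = 1) :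
    ∃ m : ℕ, 1 ≤ m ∧ z ^ m = 1 := by
  have hzQ : IsIntegral ℚ z := hz.tower_top
  let F := IntermediateField.adjoin ℚ {z}
  haveI : FiniteDimensional ℚ F := IntermediateField.adjoin.finiteDimensional hzQ
  haveI : NumberField F := ⟨⟩
  have hF : Cardinal.mk F ≤ Cardinal.aleph0 := by
    have := Algebra.IsAlgebraic.cardinalMk_le_max ℚ F
    simpa using this
  let x : F := ⟨z, IntermediateField.mem_adjoin_simple_self ℚ z⟩
  have hx : IsIntegral ℤ x :=
    (isIntegral_algebraMap_iff (B := ℂ) (algebraMap F ℂ).injective).1 hz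
  obtain ⟨n, hn, hxn⟩ := Embeddings.pow_eq_one_of_norm_eq_one F ℂ hx (fun φ => by
    obtain ⟨g, hg⟩ := exists_aut_extending hF (algebraMap F ℂ) φ
    rw [← hg]
    exact h g)
  exact ⟨n, hn, by simpa [x] using congrArg (algebraMap F ℂ) hxn⟩

/-- Composition with an automorphism of `ℂ` permutes the embeddings. -/
def postEquiv (K : Type*) [Field K] (g : ℂ ≃+* ℂ) : (K →+* ℂ) ≃ (K →+* ℂ) where
  toFun σ := (g : ℂ →+* ℂ).comp σ
  invFun σ := (g.symm : ℂ →+* ℂ).comp σ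
  left_inv σ := by ext; simp
  right_inv σ := by ext; simp

theorem sum_emb_eq_sum_place {K : Type*} [Field K] [NumberField K] (f : InfinitePlace K → ℝ) :
    ∑ τ : K →+* ℂ, f (mk τ) = ∑ w : InfinitePlace K, (mult w : ℝ) * f w := by
  classical
  rw [← Finset.sum_fiberwise (s := Finset.univ) (g := fun τ : K →+* ℂ => mk τ)]
  refine Finset.sum_congr rfl fun w _ => ?_
  rw [Finset.sum_congr rfl (g := fun _ => f w) (fun τ hτ => by rw [(Finset.mem_filter.1 hτ).2]),
    Finset.sum_const, nsmul_eq_mul]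
  congr 2
  exact card_filter_mk_eq w

theorem sum_emb_log {K : Type*} [Field K] [NumberField K] (u : (𝓞 K)ˣ) :
    ∑ τ : K →+* ℂ, Real.log ‖τ (u : K)‖ = 0 := by
  have := sum_emb_eq_sum_place (K := K) (fun w => Real.log (w (u : K)))
  rw [sum_mult_mul_log] at this
  exact this

theorem dirichlet_const {K : Type*} [Field K] [NumberField K] (t : (K →+* ℂ) → ℝ)
    (ht : ∀ τ, t (ComplexEmbedding.conjugate τ) = t τ)
    (h : ∀ u : (𝓞 K)ˣ, ∑ τ : K →+* ℂ, t τ * Real.log ‖τ (u : K)‖ = 0) (τ : K →+* ℂ) :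
    t τ = t (w₀ : InfinitePlace K).embedding := by
  classical
  let T : InfinitePlace K → ℝ := fun w => t w.embedding
  have hT : ∀ τ, t τ = T (mk τ) := fun τ => by
    rcases embedding_mk_eq τ with h | h <;> simp [T, h, ht]
  have h' : ∀ u : (𝓞 K)ˣ, ∑ w : InfinitePlace K, (mult w : ℝ) * (T w * Real.log (w (u : K))) = 0 := by
    intro u
    rw [← sum_emb_eq_sum_place (fun w => T w * Real.log (w (u : K))), ← h u]
    exact Finset.sum_congr rfl fun τ _ => by rw [hT]; rfl
  let f : logSpace K →ₗ[ℝ] ℝ :=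
    ∑ w : {w : InfinitePlace K // w ≠ w₀}, (T w.1 - T w₀) • LinearMap.proj w
  have hf : ∀ x, f x = ∑ w : {w : InfinitePlace K // w ≠ w₀}, (T w.1 - T w₀) * x w := by
    intro x; simp [f]
  have hker : ∀ x ∈ unitLattice K, f x = 0 := by
    rintro x ⟨u, -, rfl⟩
    have hu := h' u.toMul
    have hu0 := sum_mult_mul_log u.toMul
    rw [Fintype.sum_eq_add_sum_subtype_ne _ w₀] at hu hu0
    rw [hf]
    have : ∀ w : {w : InfinitePlace K // w ≠ w₀}, (T w.1 - T w₀) * (logEmbedding K u) w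
      = (mult w.1 : ℝ) * (T w.1 * Real.log (w.1 (u.toMul : K)))
        - T w₀ * ((mult w.1 : ℝ) * Real.log (w.1 (u.toMul : K))) := fun w => by
      have := logEmbedding_component u.toMul w
      rw [ofMul_toMul] at this
      rw [this]; ring
    change ∑ w : {w : InfinitePlace K // w ≠ w₀}, (T w.1 - T w₀) * (logEmbedding K u) w = 0
    rw [Finset.sum_congr rfl fun w _ => this w, Finset.sum_sub_distrib, ← Finset.mul_sum]
    linear_combination hu - T w₀ * hu0
  have hf0 : f = 0 := by
    refine LinearMap.ext_on (unitLattice_span_eq_top K) ?_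
    intro x hx
    simpa using hker x hx
  rw [hT]
  by_cases hw : mk τ = w₀
  · rw [hw]
  · have := hf (Pi.single ⟨mk τ, hw⟩ 1)
    rw [hf0] at this
    simp [Pi.single_apply] at this
    change T (mk τ) = T w₀
    linarith

theorem conj_identity {K : Type*} [Field K] [NumberField K] (S : (K →+* ℂ) → ℤ) (g : ℂ ≃+* ℂ)
    (u : (𝓞 K)ˣ) :
    2 * Real.log ‖g (∏ σ : K →+* ℂ, σ (algebraMap (𝓞 K) K (u : 𝓞 K)) ^ S σ)‖ =
      ∑ σ : K →+* ℂ, ((S (((complexConjugation g : ℂ ≃+* ℂ) : ℂ →+* ℂ).comp σ) + S σ : ℤ) : ℝ) *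
        Real.log ‖g (σ (u : K))‖ := by
  have h1 : Real.log ‖g (∏ σ : K →+* ℂ, σ (algebraMap (𝓞 K) K (u : 𝓞 K)) ^ S σ)‖ =
      ∑ σ : K →+* ℂ, (S σ : ℝ) * Real.log ‖g (σ (u : K))‖ := by
    rw [map_prod, norm_prod, Real.log_prod]
    · refine Finset.sum_congr rfl fun σ _ => ?_
      rw [map_zpow₀, norm_zpow, Real.log_zpow]
    · intro σ _
      rw [map_zpow₀, norm_zpow]
      exact zpow_ne_zero _ (by simp)
  have h2 := Equiv.sum_comp (postEquiv K (complexConjugation g))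
    (fun σ : K →+* ℂ => (S σ : ℝ) * Real.log ‖g (σ (u : K))‖)
  rw [two_mul, h1]
  nth_rewrite 1 [← h2]
  rw [← Finset.sum_add_distrib]
  refine Finset.sum_congr rfl fun σ _ => ?_
  have : ‖g (postEquiv K (complexConjugation g) σ (u : K))‖ = ‖g (σ (u : K))‖ := by
    simp [postEquiv, complexConjugation]
  rw [this]
  push_cast
  rw [add_mul]
  rfl

/-- The character `θ^S` is balanced (i.e. `S(c'∘σ) + S(σ)` is independent of `σ` for every
complex conjugation `c'`) if and only if `θ^S(u)` is a root of unity for every unit `u` of the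
ring of integers of `K`. -/
theorem stmt0 (K : Type*) [Field K] [NumberField K] (S : (K →+* ℂ) → ℤ) :
    (∀ g : ℂ ≃+* ℂ, ∃ a : ℤ, ∀ σ : K →+* ℂ,
        S (((complexConjugation g : ℂ ≃+* ℂ) : ℂ →+* ℂ).comp σ) + S σ = a) ↔
    (∀ u : (𝓞 K)ˣ, ∃ m : ℕ, 1 ≤ m ∧
        (∏ σ : K →+* ℂ, σ (algebraMap (𝓞 K) K (u : 𝓞 K)) ^ S σ) ^ m = 1) := by
  constructor
  · intro h u
    have hint : ∀ (n : ℤ) (σ : K →+* ℂ), IsIntegral ℤ (σ (algebraMap (𝓞 K) K (u : 𝓞 K)) ^ n) := by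
      intro n σ
      have := (RingOfIntegers.isIntegral_coe ((u ^ n : (𝓞 K)ˣ) : 𝓞 K)).map (σ.toIntAlgHom)
      rw [← map_zpow₀]
      have h2 := coe_zpow u n
      change IsIntegral ℤ (σ (((u ^ n : (𝓞 K)ˣ) : 𝓞 K) : K)) at this
      rw [coe_coe, h2] at this
      exact this
    refine kronecker_aut _ (IsIntegral.prod _ fun σ _ => hint _ σ) fun g => ?_
    obtain ⟨a, ha⟩ := h g
    have key := conj_identity S g u
    simp_rw [ha] at key
    rw [← Finset.mul_sum] at key
    have h2 := Equiv.sum_comp (postEquiv K g) (fun σ : K →+* ℂ => Real.log ‖σ (u : K)‖)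
    rw [sum_emb_log] at h2
    have h3 : ∑ σ : K →+* ℂ, Real.log ‖g (σ (u : K))‖ = 0 := h2
    rw [h3, mul_zero] at key
    refine Real.eq_one_of_pos_of_log_eq_zero ?_ (by linarith)
    rw [norm_pos_iff, Ne, map_eq_zero, Finset.prod_eq_zero_iff]
    rintro ⟨σ, -, h0⟩
    exact zpow_ne_zero _ (by simp) h0
  · intro h g
    let t : (K →+* ℂ) → ℤ := fun τ =>
      S (((complexConjugation g : ℂ ≃+* ℂ) : ℂ →+* ℂ).comp ((postEquiv K g).symm τ)) +
        S ((postEquiv K g).symm τ)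
    have hconst := dirichlet_const (K := K) (fun τ => (t τ : ℝ)) (fun τ => by
      have e1 : ((complexConjugation g : ℂ ≃+* ℂ) : ℂ →+* ℂ).comp
          ((postEquiv K g).symm (ComplexEmbedding.conjugate τ)) = (postEquiv K g).symm τ := by
        ext x; simp [postEquiv, complexConjugation]
      have e2 : ((complexConjugation g : ℂ ≃+* ℂ) : ℂ →+* ℂ).comp
          ((postEquiv K g).symm τ) = (postEquiv K g).symm (ComplexEmbedding.conjugate τ) := by
        ext x; simp [postEquiv, complexConjugation]
      simp only [t, e1, e2]
      rw [add_comm]) (fun u => by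
      rw [← Equiv.sum_comp (postEquiv K g)]
      simp only [t, Equiv.symm_apply_apply]
      refine (conj_identity S g u).symm.trans ?_
      obtain ⟨m, hm, hm1⟩ := h u
      have : ‖g (∏ σ : K →+* ℂ, σ (algebraMap (𝓞 K) K (u : 𝓞 K)) ^ S σ)‖ = 1 := by
        refine (pow_eq_one_iff_of_nonneg (norm_nonneg _) (show m ≠ 0 by omega)).1 ?_
        rw [← norm_pow, ← map_pow, hm1, map_one, norm_one]
      rw [this]; simp)
    refine ⟨t (w₀ : InfinitePlace K).embedding, fun σ => ?_⟩
    have := hconst (postEquiv K g σ)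
    simp only [Int.cast_inj] at this
    rw [← this]
    simp only [t, Equiv.symm_apply_apply]
end

section
/- Let M be a field, N a field extension of M, and A, B be n×n matrices with entries in M. If there exists an invertible n×n matrix P over N such that P⁻¹·A·P = B (where A and B are viewed as matrices over N via the inclusion M ⊆ N), then there exists an invertible n×n matrix Q over M such that Q⁻¹·A·Q = B. In particular, two matrices over M that are conjugate in GL_n(N) are already conjugate in GL_n(M). -/
open scoped Kronecker Matrix in
theorem aux_rank_map {M N m : Type*} [Field M] [Field N] [Algebra M N] [Fintype m] [DecidableEq m]
    (A : Matrix m m M) : (A.map (algebraMap M N)).rank = A.rank := by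
  classical
  obtain ⟨L, L', D, h⟩ := Matrix.Pivot.exists_list_transvec_mul_mul_list_transvec_eq_diagonal A
  set S := (L.map Matrix.TransvectionStruct.toMatrix).prod with hS
  set T := (L'.map Matrix.TransvectionStruct.toMatrix).prod with hT
  have dS : S.det = 1 := Matrix.TransvectionStruct.det_toMatrix_prod L
  have dT : T.det = 1 := Matrix.TransvectionStruct.det_toMatrix_prod L'
  have key : ∀ (K : Type _) [Field K] (S A T : Matrix m m K), S.det = 1 → T.det = 1 →
      (S * A * T).rank = A.rank := by
    intro K _ S A T hS hT
    rw [Matrix.rank_mul_eq_left_of_isUnit_det _ _ (by simp [hT]),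
      Matrix.rank_mul_eq_right_of_isUnit_det _ _ (by simp [hS])]
  have key' : ∀ (S A T : Matrix m m N), S.det = 1 → T.det = 1 →
      (S * A * T).rank = A.rank := by
    intro S A T hS hT
    rw [Matrix.rank_mul_eq_left_of_isUnit_det _ _ (by simp [hT]),
      Matrix.rank_mul_eq_right_of_isUnit_det _ _ (by simp [hS])]
  have h2 : S.map (algebraMap M N) * A.map (algebraMap M N) * T.map (algebraMap M N)
      = Matrix.diagonal (fun i => algebraMap M N (D i)) := by
    rw [← Matrix.map_mul, ← Matrix.map_mul, h, Matrix.diagonal_map (map_zero _)]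
  have e1 : ∀ S : Matrix m m M, S.det = 1 → (S.map (algebraMap M N)).det = 1 := by
    intro S hS
    have := (RingHom.map_det (algebraMap M N) S)
    rw [hS, map_one] at this
    exact this.symm
  rw [← key M S A T dS dT, ← key' _ (A.map (algebraMap M N)) _ (e1 S dS) (e1 T dT), h, h2,
    Matrix.rank_diagonal, Matrix.rank_diagonal]
  simp

theorem aux_infinite {M N : Type*} [Field M] [Field N] [Algebra M N] [Infinite M] (n : ℕ)
    (A B : Matrix (Fin n) (Fin n) M) (P : Matrix (Fin n) (Fin n) N) (hP : P.det ≠ 0)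
    (h : A.map (algebraMap M N) * P = P * B.map (algebraMap M N)) :
    ∃ Q : Matrix (Fin n) (Fin n) M, Q.det ≠ 0 ∧ A * Q = Q * B := by
  classical
  let b := Module.Basis.ofVectorSpace M N
  let F : Matrix (Fin n) (Fin n) (MvPolynomial _ M) := P.map (b.constr M MvPolynomial.X)
  have hev : ∀ x : N, MvPolynomial.aeval b (b.constr M (MvPolynomial.X (R := M)) x) = x := by
    intro x
    have : (MvPolynomial.aeval b).toLinearMap ∘ₗ (b.constr M (MvPolynomial.X (R := M)))
        = LinearMap.id := by
      apply b.ext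
      intro i
      simp
    exact LinearMap.congr_fun this x
  have hF : F.det ≠ 0 := by
    intro h0
    apply hP
    have := AlgHom.map_det (MvPolynomial.aeval b) F
    rw [h0, map_zero] at this
    rw [this]
    congr 1
    ext i j
    exact (hev _).symm
  obtain ⟨x, hx⟩ : ∃ x, MvPolynomial.eval x F.det ≠ 0 := by
    by_contra! hc
    exact hF (MvPolynomial.funext (by simpa using hc))
  have hev2 : ∀ y : N, MvPolynomial.aeval x (b.constr M (MvPolynomial.X (R := M)) y)
      = b.constr M x y := by
    intro y
    have : (MvPolynomial.aeval x).toLinearMap ∘ₗ (b.constr M (MvPolynomial.X (R := M)))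
        = b.constr M x := by
      apply b.ext
      intro i
      simp
    exact LinearMap.congr_fun this y
  refine ⟨P.map (b.constr M x), ?_, ?_⟩
  · rw [RingHom.map_det] at hx
    convert hx using 2
    ext i j
    simp only [F, RingHom.mapMatrix_apply, Matrix.map_apply]
    rw [← hev2, MvPolynomial.aeval_eq_eval]
  · ext i j
    have := congrArg (b.constr M x) (congrFun (congrFun h i) j)
    simp only [Matrix.mul_apply, Matrix.map_apply, map_sum] at this
    simp only [Matrix.mul_apply, Matrix.map_apply]
    convert this using 2
    · rw [← Algebra.smul_def, map_smul, smul_eq_mul]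
    · rw [mul_comm (P _ _), ← Algebra.smul_def, map_smul, smul_eq_mul, mul_comm]

/-- Intertwiners with prescribed kernel correspond to injective intertwiners from the quotient. -/
def auxEquiv {M U V : Type*} [Field M] [AddCommGroup U] [Module M U] [AddCommGroup V] [Module M V]
    (c : U →ₗ[M] U) (φ : V →ₗ[M] V) (K : Submodule M U) (hK : K ≤ K.comap c) :
    {f : U →ₗ[M] V // φ ∘ₗ f = f ∘ₗ c ∧ LinearMap.ker f = K} ≃
    {g : (U ⧸ K) →ₗ[M] V // φ ∘ₗ g = g ∘ₗ (K.mapQ K c hK) ∧ LinearMap.ker g = ⊥} where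
  toFun f := ⟨K.liftQ f.1 f.2.2.ge, by
    constructor
    · apply Submodule.linearMap_qext
      ext u
      simpa using LinearMap.congr_fun f.2.1 u
    · exact Submodule.ker_liftQ_eq_bot _ _ _ f.2.2.le⟩
  invFun g := ⟨g.1 ∘ₗ K.mkQ, by
    constructor
    · ext u
      simpa using LinearMap.congr_fun g.2.1 (K.mkQ u)
    · rw [LinearMap.ker_comp, g.2.2, Submodule.comap_bot, Submodule.ker_mkQ]⟩
  left_inv f := by
    ext u
    simp
  right_inv g := by
    apply Subtype.ext
    apply Submodule.linearMap_qext
    ext u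
    simp

theorem aux_lovasz {M V : Type u} [Field M] [Finite M] [AddCommGroup V] [Module M V] [Finite V]
    (φ ψ : V →ₗ[M] V)
    (H : ∀ (U : Type u) [AddCommGroup U] [Module M U] [Finite U] (c : U →ₗ[M] U),
      Nat.card {f : U →ₗ[M] V // φ ∘ₗ f = f ∘ₗ c} = Nat.card {f : U →ₗ[M] V // ψ ∘ₗ f = f ∘ₗ c})
    (k : ℕ) : ∀ (U : Type u) [AddCommGroup U] [Module M U] [Finite U] (c : U →ₗ[M] U),
      Nat.card U = k →
      Nat.card {f : U →ₗ[M] V // φ ∘ₗ f = f ∘ₗ c ∧ LinearMap.ker f = ⊥}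
        = Nat.card {f : U →ₗ[M] V // ψ ∘ₗ f = f ∘ₗ c ∧ LinearMap.ker f = ⊥} := by
  classical
  induction k using Nat.strong_induction_on with
  | _ k ih =>
  intro U _ _ _ c hk
  have hfin : Finite (U →ₗ[M] V) := Finite.of_injective _ DFunLike.coe_injective
  have hfinS : Finite (Submodule M U) := Finite.of_injective _ SetLike.coe_injective
  have := Fintype.ofFinite (Submodule M U)
  have split : ∀ θ : V →ₗ[M] V, Nat.card {f : U →ₗ[M] V // θ ∘ₗ f = f ∘ₗ c} =
      ∑ K : Submodule M U, Nat.card {f : U →ₗ[M] V // θ ∘ₗ f = f ∘ₗ c ∧ LinearMap.ker f = K} := by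
    intro θ
    rw [← Nat.card_sigma]
    refine Nat.card_congr
      ⟨fun f => ⟨LinearMap.ker f.1, f.1, f.2, rfl⟩, fun x => ⟨x.2.1, x.2.2.1⟩, ?_, ?_⟩
    · intro f; rfl
    · rintro ⟨K, f, h1, rfl⟩; rfl
  have h := H U c
  rw [split, split, ← Finset.add_sum_erase _ _ (Finset.mem_univ ⊥),
    ← Finset.add_sum_erase (a := (⊥ : Submodule M U)) _ _ (Finset.mem_univ ⊥)] at h
  have e : ∀ K ∈ Finset.univ.erase (⊥ : Submodule M U),
      Nat.card {f : U →ₗ[M] V // φ ∘ₗ f = f ∘ₗ c ∧ LinearMap.ker f = K}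
        = Nat.card {f : U →ₗ[M] V // ψ ∘ₗ f = f ∘ₗ c ∧ LinearMap.ker f = K} := by
    intro K hK
    have hK0 : K ≠ ⊥ := by simpa using hK
    by_cases hc : K ≤ K.comap c
    · have hfq : Finite (U ⧸ K) := Finite.of_surjective _ (Submodule.mkQ_surjective K)
      rw [Nat.card_congr (auxEquiv c φ K hc), Nat.card_congr (auxEquiv c ψ K hc)]
      refine ih (Nat.card (U ⧸ K)) ?_ (U ⧸ K) _ rfl
      rw [← hk, Submodule.card_eq_card_quotient_mul_card K]
      have h1 : 1 < Nat.card K := by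
        have := (Submodule.nontrivial_iff_ne_bot).2 hK0
        exact Finite.one_lt_card
      have h2 : 0 < Nat.card (U ⧸ K) := Nat.card_pos
      nlinarith
    · have emp : ∀ θ : V →ₗ[M] V,
          IsEmpty {f : U →ₗ[M] V // θ ∘ₗ f = f ∘ₗ c ∧ LinearMap.ker f = K} := by
        intro θ
        refine ⟨fun f => hc fun u hu => ?_⟩
        obtain ⟨f, h1, rfl⟩ := f
        have := LinearMap.congr_fun h1 u
        simp only [LinearMap.comp_apply] at this
        rw [LinearMap.mem_ker] at hu
        rw [Submodule.mem_comap, LinearMap.mem_ker, ← this, hu, map_zero]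
      have := emp φ
      have := emp ψ
      simp
  rw [Finset.sum_congr rfl e] at h
  exact Nat.add_right_cancel h

open scoped Kronecker Matrix in
theorem aux_count {M N : Type*} [Field M] [Field N] [Algebra M N] [Finite M] (n m : ℕ)
    (A B : Matrix (Fin n) (Fin n) M) (C : Matrix (Fin m) (Fin m) M)
    (P : Matrix (Fin n) (Fin n) N) (hP : P.det ≠ 0)
    (h : A.map (algebraMap M N) * P = P * B.map (algebraMap M N)) :
    Nat.card {X : Matrix (Fin n) (Fin m) M // A * X = X * C}
      = Nat.card {X : Matrix (Fin n) (Fin m) M // B * X = X * C} := by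
  classical
  let T : Matrix (Fin n) (Fin n) M → Matrix (Fin m × Fin n) (Fin m × Fin n) M :=
    fun A => (1 : Matrix (Fin m) (Fin m) M) ⊗ₖ A - Cᵀ ⊗ₖ (1 : Matrix (Fin n) (Fin n) M)
  have hmap : ∀ A, (T A).map (algebraMap M N) = (1 : Matrix (Fin m) (Fin m) N) ⊗ₖ
      (A.map (algebraMap M N)) - (C.map (algebraMap M N))ᵀ ⊗ₖ (1 : Matrix (Fin n) (Fin n) N) := by
    intro A
    ext ⟨i, j⟩ ⟨k, l⟩
    simp [T, Matrix.one_apply, apply_ite (algebraMap M N)]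
  have hrank : (T A).rank = (T B).rank := by
    rw [← aux_rank_map (N := N) (T A), ← aux_rank_map (N := N) (T B)]
    have hd : IsUnit ((1 : Matrix (Fin m) (Fin m) N) ⊗ₖ P).det := by
      rw [Matrix.det_kronecker]
      simp [hP]
    rw [← Matrix.rank_mul_eq_left_of_isUnit_det _ ((T A).map _) hd,
      ← Matrix.rank_mul_eq_right_of_isUnit_det _ ((T B).map (algebraMap M N)) hd, hmap, hmap,
      Matrix.sub_mul, Matrix.mul_sub]
    simp only [← Matrix.mul_kronecker_mul, h, Matrix.one_mul, Matrix.mul_one]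
  have hcard : ∀ A, Nat.card {X : Matrix (Fin n) (Fin m) M // A * X = X * C}
      = Nat.card M ^ (m * n - (T A).rank) := by
    intro A
    have h1 : Nat.card {X : Matrix (Fin n) (Fin m) M // A * X = X * C}
        = Nat.card (LinearMap.ker (T A).mulVecLin) := by
      refine Nat.card_congr ((Equiv.ofBijective _ Matrix.vec_bijective).subtypeEquiv ?_)
      intro X
      have : (T A).mulVecLin X.vec = (A * X - X * C).vec := by
        simp only [T, Matrix.mulVecLin_apply, Matrix.sub_mulVec, Matrix.kronecker_mulVec_vec]
        simp
      rw [Equiv.ofBijective_apply, LinearMap.mem_ker, this, Matrix.vec_eq_zero_iff, sub_eq_zero]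
    rw [h1, Module.natCard_eq_pow_finrank (K := M)]
    congr 1
    have := LinearMap.finrank_range_add_finrank_ker (T A).mulVecLin
    rw [Module.finrank_fintype_fun_eq_card, Fintype.card_prod, Fintype.card_fin,
      Fintype.card_fin] at this
    rw [Matrix.rank]
    omega
  rw [hcard, hcard, hrank]

theorem aux_finite {M N : Type*} [Field M] [Field N] [Algebra M N] [Finite M] (n : ℕ)
    (A B : Matrix (Fin n) (Fin n) M) (P : Matrix (Fin n) (Fin n) N) (hP : P.det ≠ 0)
    (h : A.map (algebraMap M N) * P = P * B.map (algebraMap M N)) :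
    ∃ Q : Matrix (Fin n) (Fin n) M, Q.det ≠ 0 ∧ A * Q = Q * B := by
  classical
  have key := aux_lovasz (M := M) (V := Fin n → M) A.toLin' B.toLin' (by
    intro U _ _ _ c
    have : FiniteDimensional M U := inferInstance
    let b := Module.finBasis M U
    have tr : ∀ A : Matrix (Fin n) (Fin n) M,
        Nat.card {f : U →ₗ[M] (Fin n → M) // A.toLin' ∘ₗ f = f ∘ₗ c} =
        Nat.card {X : Matrix (Fin n) (Fin (Module.finrank M U)) M //
          A * X = X * LinearMap.toMatrix b b c} := by
      intro A
      refine Nat.card_congr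
        ((LinearMap.toMatrix b (Pi.basisFun M (Fin n))).toEquiv.subtypeEquiv ?_)
      intro f
      rw [← (LinearMap.toMatrix b (Pi.basisFun M (Fin n))).injective.eq_iff,
        LinearMap.toMatrix_comp b (Pi.basisFun M (Fin n)) (Pi.basisFun M (Fin n)),
        LinearMap.toMatrix_comp b b (Pi.basisFun M (Fin n)),
        LinearMap.toMatrix_eq_toMatrix', LinearMap.toMatrix'_toLin']
      rfl
    rw [tr, tr]
    exact aux_count n _ A B _ P hP h) _ (Fin n → M) B.toLin' rfl
  have hne : Nat.card {f : (Fin n → M) →ₗ[M] (Fin n → M) //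
      A.toLin' ∘ₗ f = f ∘ₗ B.toLin' ∧ LinearMap.ker f = ⊥} ≠ 0 := by
    rw [key]
    have : Finite ((Fin n → M) →ₗ[M] (Fin n → M)) := Finite.of_injective _ DFunLike.coe_injective
    have : Nonempty {f : (Fin n → M) →ₗ[M] (Fin n → M) //
      B.toLin' ∘ₗ f = f ∘ₗ B.toLin' ∧ LinearMap.ker f = ⊥} :=
      ⟨LinearMap.id, by simp, by simp⟩
    exact Nat.card_pos.ne'
  obtain ⟨⟨f, hf, hk⟩⟩ := (Nat.card_ne_zero.1 hne).1
  refine ⟨LinearMap.toMatrix' f, ?_, ?_⟩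
  · rw [LinearMap.det_toMatrix']
    exact (LinearMap.isUnit_iff_ker_eq_bot f |>.2 hk |>.map LinearMap.det).ne_zero
  · have := congrArg LinearMap.toMatrix' hf
    simpa [LinearMap.toMatrix'_comp] using this

/-- Two square matrices over a field `M` that become conjugate over a field extension `N`
are already conjugate over `M`. -/
theorem stmt4 (M N : Type*) [Field M] [Field N] [Algebra M N] (n : ℕ)
    (A B : Matrix (Fin n) (Fin n) M)
    (h : ∃ P : Matrix (Fin n) (Fin n) N, IsUnit P ∧
        P⁻¹ * A.map (algebraMap M N) * P = B.map (algebraMap M N)) :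
    ∃ Q : Matrix (Fin n) (Fin n) M, IsUnit Q ∧ Q⁻¹ * A * Q = B := by
  obtain ⟨P, hP, h⟩ := h
  have hd := (Matrix.isUnit_iff_isUnit_det P).1 hP
  have h' : A.map (algebraMap M N) * P = P * B.map (algebraMap M N) := by
    rw [← h, Matrix.mul_assoc, Matrix.mul_nonsing_inv_cancel_left _ _ hd]
  have : ∃ Q : Matrix (Fin n) (Fin n) M, Q.det ≠ 0 ∧ A * Q = Q * B := by
    rcases finite_or_infinite M with hM | hM
    · exact aux_finite n A B P hd.ne_zero h'
    · exact aux_infinite n A B P hd.ne_zero h'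
  obtain ⟨Q, hQ, hAQ⟩ := this
  have hQu : IsUnit Q.det := isUnit_iff_ne_zero.2 hQ
  refine ⟨Q, (Matrix.isUnit_iff_isUnit_det Q).2 hQu, ?_⟩
  rw [Matrix.mul_assoc, hAQ, Matrix.nonsing_inv_mul_cancel_left _ _ hQu]
end

section
/- Let K and L be number fields, p a rational prime that is unramified in K, and v a maximal ideal of 𝓞_K lying over p whose residue degree is 1 (i.e. 𝓞_K/v has p elements). If σ, τ : K → L are two distinct field embeddings, then the ideals σ(v)𝓞_L and τ(v)𝓞_L of 𝓞_L are comaximal: σ(v)𝓞_L + τ(v)𝓞_L = 𝓞_L. -/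
open NumberField

/-- Integers surject onto a quotient ring of prime cardinality. -/
lemma exists_int_sub_mem {R : Type*} [CommRing R] (v : Ideal R) (hv : v ≠ ⊤) (p : ℕ) (hp : p.Prime)
    (hdeg : Nat.card (R ⧸ v) = p) (x : R) : ∃ a : ℤ, x - (a : R) ∈ v := by
  haveI : Fact p.Prime := ⟨hp⟩
  haveI : Nontrivial (R ⧸ v) := Ideal.Quotient.nontrivial_iff.2 hv
  have h : Ideal.Quotient.mk v x ∈ AddSubgroup.zmultiples (1 : R ⧸ v) :=
    mem_zmultiples_of_prime_card hdeg one_ne_zero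
  obtain ⟨a, ha⟩ := AddSubgroup.mem_zmultiples_iff.1 h
  refine ⟨a, ?_⟩
  rw [← Ideal.Quotient.eq_zero_iff_mem, map_sub, ← ha]
  simp

/-- Integers are dense for the `v`-adic topology. -/
lemma exists_int_sub_mem_pow {R : Type*} [CommRing R] [IsDedekindDomain R]
    (v : Ideal R) (hv : v.IsMaximal) (p : ℕ) (hp : p.Prime)
    (hunr : Squarefree (Ideal.span {(p : R)} : Ideal R)) (hvp : (p : R) ∈ v)
    (hdeg : Nat.card (R ⧸ v) = p) (n : ℕ) : ∀ x : R, ∃ a : ℤ, x - (a : R) ∈ v ^ n := by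
  have hdvd : v ∣ Ideal.span {(p : R)} := by
    rw [Ideal.dvd_iff_le, Ideal.span_singleton_le_iff_mem]; exact hvp
  obtain ⟨J, hJ⟩ := hdvd
  have hcop : IsCoprime v J := by
    rw [Ideal.isCoprime_iff_sup_eq]
    by_contra h
    have hle : v = v ⊔ J := hv.eq_of_le h le_sup_left
    have hJv : J ≤ v := by rw [hle]; exact le_sup_right
    obtain ⟨J', rfl⟩ := Ideal.dvd_iff_le.2 hJv
    have := hunr v ⟨J', by rw [hJ, mul_assoc]⟩
    exact hv.ne_top (Ideal.isUnit_iff.1 this)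
  induction n with
  | zero => intro x; exact ⟨0, by simp⟩
  | succ n ih =>
    intro x
    obtain ⟨a, ha⟩ := exists_int_sub_mem v hv.ne_top p hp hdeg x
    obtain ⟨u, hu, e, he, hue⟩ := Ideal.isCoprime_iff_exists.1 (hcop.pow_left (m := n))
    have hmem : (x - (a : R)) * e ∈ Ideal.span {(p : R)} := by
      rw [hJ]; exact Ideal.mul_mem_mul ha he
    obtain ⟨z, hz⟩ := Ideal.mem_span_singleton'.1 hmem
    obtain ⟨b, hb⟩ := ih z
    refine ⟨a + p * b, ?_⟩
    have h1 : u * (x - (a : R)) ∈ v ^ (n + 1) := by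
      rw [pow_succ]; exact Ideal.mul_mem_mul hu ha
    have h2 : (z - (b : R)) * p ∈ v ^ (n + 1) := by
      rw [pow_succ]; exact Ideal.mul_mem_mul hb hvp
    convert add_mem h1 h2 using 1
    push_cast
    linear_combination (-(x - (a : R))) * hue - hz

/-- Let `K`, `L` be number fields, `p` a rational prime unramified in `K`, and `v` a maximal
ideal of `𝓞 K` lying over `p` with residue degree `1`.  If `σ ≠ τ` are two embeddings
`K → L`, then the ideals `σ(v)𝓞 L` and `τ(v)𝓞 L` are comaximal. -/
theorem stmt6 (K L : Type*) [Field K] [NumberField K] [Field L] [NumberField L]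
    (p : ℕ) (hp : p.Prime)
    (hunr : Squarefree (Ideal.span {(p : 𝓞 K)} : Ideal (𝓞 K)))
    (v : Ideal (𝓞 K)) (hv : v.IsMaximal) (hvp : (p : 𝓞 K) ∈ v)
    (hdeg : Nat.card (𝓞 K ⧸ v) = p)
    (σ τ : K →+* L) (hστ : σ ≠ τ) :
    Ideal.map (RingOfIntegers.mapRingHom σ) v
      + Ideal.map (RingOfIntegers.mapRingHom τ) v = ⊤ := by
  by_contra hne
  set I := Ideal.map (RingOfIntegers.mapRingHom σ) v
      + Ideal.map (RingOfIntegers.mapRingHom τ) v with hI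
  have key : ∀ ρ : K →+* L, Ideal.map (RingOfIntegers.mapRingHom ρ) v ≤ I →
      ∀ n : ℕ, ∀ y ∈ v ^ n, RingOfIntegers.mapRingHom ρ y ∈ I ^ n := by
    intro ρ hρ n y hy
    have := Ideal.mem_map_of_mem (RingOfIntegers.mapRingHom ρ) hy
    rw [Ideal.map_pow] at this
    exact Ideal.pow_right_mono hρ n this
  have heq : ∀ x : 𝓞 K, RingOfIntegers.mapRingHom σ x = RingOfIntegers.mapRingHom τ x := by
    intro x
    rw [← sub_eq_zero, ← Ideal.mem_bot, ← Ideal.iInf_pow_eq_bot_of_isDomain I hne,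
      Ideal.mem_iInf]
    intro n
    obtain ⟨a, ha⟩ := exists_int_sub_mem_pow v hv p hp hunr hvp hdeg n x
    have h1 := key σ le_sup_left n _ ha
    have h2 := key τ le_sup_right n _ ha
    rw [map_sub, map_intCast] at h1 h2
    convert sub_mem h1 h2 using 1
    ring
  apply hστ
  apply IsFractionRing.injective_comp_algebraMap (A := 𝓞 K)
  ext x
  exact congrArg (algebraMap (𝓞 L) L) (heq x)
end

section
/- Let K be a number field, L a finite Galois extension of ℚ admitting at least one field embedding of K, and τ a ℚ-automorphism of L. Let p be a rational prime unramified in K, and let v be a maximal ideal of 𝓞_K lying over p with residue degree 1. Let S be a function from the set of field embeddings K → L to ℤ. If the fractional ideals of L given by ∏_σ (σ(v)𝓞_L)^{S(σ)} and ∏_σ ((τ∘σ)(v)𝓞_L)^{S(σ)} (products over all embeddings σ : K → L) are equal, then S(τ∘σ) = S(σ) for every embedding σ : K → L. -/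
open NumberField

theorem aux_norm {K L : Type*} [Field K] [NumberField K] [Field L] [NumberField L]
    (σ σ' : K →+* L) (hne : σ ≠ σ') (a : 𝓞 K) (ha : a ≠ 0) :
    ∃ t : 𝓞 L, ((Algebra.norm ℤ a : ℤ) : 𝓞 L) =
      RingOfIntegers.mapRingHom σ a * RingOfIntegers.mapRingHom σ' a * t := by
  classical
  let E := AlgebraicClosure L
  let ι : L →ₐ[ℚ] E := (Algebra.ofId L E).restrictScalars ℚ
  let s1 : K →ₐ[ℚ] E := ι.comp σ.toRatAlgHom
  let s2 : K →ₐ[ℚ] E := ι.comp σ'.toRatAlgHom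
  have h12 : s2 ≠ s1 := by
    intro h
    apply hne
    ext x
    have := DFunLike.congr_fun h x
    exact ι.injective this.symm
  have hN := Algebra.norm_eq_prod_embeddings ℚ E (a : K)
  rw [← Finset.mul_prod_erase _ _ (Finset.mem_univ s1),
    ← Finset.mul_prod_erase _ _ (Finset.mem_erase.2 ⟨h12, Finset.mem_univ s2⟩),
    ← Algebra.coe_norm_int] at hN
  set T := ∏ x ∈ (Finset.univ.erase s1).erase s2, x (a : K) with hT
  have hTint : IsIntegral ℤ T := by
    apply IsIntegral.prod
    intro x _
    exact map_isIntegral_int x a.2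
  have ha' : (a : K) ≠ 0 := by simpa using ha
  have h1 : σ (a : K) ≠ 0 := by simpa using ha'
  have h2 : σ' (a : K) ≠ 0 := by simpa using ha'
  let t : L := ((Algebra.norm ℤ a : ℤ) : L) / (σ (a : K) * σ' (a : K))
  have ht : ι t = T := by
    have e1 : s1 (a : K) = ι (σ a) := rfl
    have e2 : s2 (a : K) = ι (σ' a) := rfl
    have n1 : ι (σ a) ≠ 0 := by simpa using ha'
    have n2 : ι (σ' a) ≠ 0 := by simpa using ha'
    rw [e1, e2] at hN
    simp only [t, map_div₀, map_mul, map_intCast] at hN ⊢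
    rw [div_eq_iff (mul_ne_zero n1 n2), hN]
    ring
  have htint : IsIntegral ℤ t := by
    rw [← ht] at hTint
    exact (isIntegral_algHom_iff (ι.restrictScalars ℤ) ι.injective).1 hTint
  refine ⟨⟨t, htint⟩, ?_⟩
  apply RingOfIntegers.ext
  have hl : (((Algebra.norm ℤ a : ℤ) : 𝓞 L) : L) = ((Algebra.norm ℤ a : ℤ) : L) :=
    map_intCast (algebraMap (𝓞 L) L) _
  refine hl.trans ?_
  change _ = σ (a : K) * σ' (a : K) * t
  simp only [t]
  field_simp

theorem aux_coprime {K L : Type*} [Field K] [NumberField K] [Field L] [NumberField L]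
    (p : ℕ) (hp : p.Prime)
    (hunr : Squarefree (Ideal.span {(p : 𝓞 K)} : Ideal (𝓞 K)))
    (v : Ideal (𝓞 K)) (hv : v.IsMaximal) (hvp : (p : 𝓞 K) ∈ v)
    (hdeg : Nat.card (𝓞 K ⧸ v) = p)
    (σ σ' : K →+* L) (P : Ideal (𝓞 L)) (hP : P.IsPrime)
    (h1 : Ideal.map (RingOfIntegers.mapRingHom σ) v ≤ P)
    (h2 : Ideal.map (RingOfIntegers.mapRingHom σ') v ≤ P) : σ = σ' := by
  by_contra hne
  rw [Ideal.map_le_iff_le_comap] at h1 h2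
  have hp0 : (p : 𝓞 K) ≠ 0 := by exact_mod_cast hp.ne_zero
  have hsp0 : (Ideal.span {(p : 𝓞 K)} : Ideal (𝓞 K)) ≠ 0 := by simpa using hp0
  have hv0 : v ≠ 0 := by
    rintro rfl
    exact hp0 (by simpa using hvp)
  obtain ⟨I, hI⟩ : v ∣ Ideal.span {(p : 𝓞 K)} := by
    rw [Ideal.dvd_iff_le, Ideal.span_singleton_le_iff_mem]; exact hvp
  have hIv : ¬ I ≤ v := by
    intro hle
    obtain ⟨J, hJ⟩ := Ideal.dvd_iff_le.2 hle
    have := hunr v ⟨J, by rw [hI, hJ, mul_assoc]⟩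
    rw [Ideal.isUnit_iff] at this
    exact hv.ne_top this
  obtain ⟨b, hbI, hbv⟩ := Set.not_subset.1 hIv
  -- the element `a`
  obtain ⟨a, ha⟩ := IsDedekindDomain.exists_sup_span_eq
    (I := v * Ideal.span {(p : 𝓞 K)}) (J := v) Ideal.mul_le_left (mul_ne_zero hv0 hsp0)
  have hav : a ∈ v := by
    rw [← Ideal.span_singleton_le_iff_mem]
    exact le_sup_right.trans ha.le
  obtain ⟨J, hJ⟩ : v ∣ Ideal.span {a} := by
    rw [Ideal.dvd_iff_le, Ideal.span_singleton_le_iff_mem]; exact hav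
  have hJp : Ideal.span {(p : 𝓞 K)} ⊔ J = ⊤ := by
    rw [hJ, ← Ideal.mul_sup] at ha
    have := mul_left_cancel₀ hv0 (ha.trans (mul_one v).symm)
    simpa using this
  have hpJ : ¬ p ∣ Ideal.absNorm J := by
    intro hd
    obtain ⟨Q, hQ, hQp, hQJ⟩ := Ideal.exists_isMaximal_dvd_of_dvd_absNorm' hp J hd
    apply hQ.ne_top
    rw [eq_top_iff, ← hJp, sup_le_iff]
    refine ⟨?_, Ideal.le_of_dvd hQJ⟩
    rw [Ideal.span_singleton_le_iff_mem]
    have : (p : ℤ) ∈ Q.under ℤ := by rw [hQp]; exact Ideal.mem_span_singleton_self _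
    simpa [Ideal.under_def] using this
  have ha0 : a ≠ 0 := by
    rintro rfl
    have : J = 0 := by
      have : v * J = 0 := by rw [← hJ]; simp
      exact (mul_eq_zero.1 this).resolve_left hv0
    apply hpJ
    simp [this]
  have hnv : Ideal.absNorm v = p := by
    rw [Ideal.absNorm_apply, ← hdeg]; rfl
  obtain ⟨u, hu, hup⟩ : ∃ u : ℤ, Algebra.norm ℤ a = p * u ∧ ¬ (p : ℤ) ∣ u := by
    have h := Ideal.absNorm_span_singleton a
    rw [hJ, map_mul, hnv] at h
    rcases Int.natAbs_eq (Algebra.norm ℤ a) with h' | h'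
    · refine ⟨Ideal.absNorm J, by rw [h', ← h]; push_cast; ring, by exact_mod_cast hpJ⟩
    · refine ⟨-Ideal.absNorm J, by rw [h', ← h]; push_cast; ring, ?_⟩
      rw [dvd_neg]; exact_mod_cast hpJ
  obtain ⟨t, ht⟩ := aux_norm σ σ' hne a ha0
  obtain ⟨c, hc⟩ : (p : 𝓞 K) ∣ a * b := by
    rw [← Ideal.mem_span_singleton, hI]
    exact Ideal.mul_mem_mul hav hbI
  have hpP : (p : 𝓞 L) ∈ P := by
    have := h1 hvp
    simpa using this
  have huP : (u : 𝓞 L) ∉ P := by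
    intro huP
    have hcop : IsCoprime (p : ℤ) u :=
      ((Nat.prime_iff_prime_int.1 hp).coprime_iff_not_dvd).2 hup
    obtain ⟨x, y, hxy⟩ := hcop
    apply hP.ne_top
    rw [Ideal.eq_top_iff_one]
    have := P.add_mem (P.mul_mem_left (x : 𝓞 L) hpP) (P.mul_mem_left (y : 𝓞 L) huP)
    have e : (x : 𝓞 L) * p + y * u = 1 := by exact_mod_cast congrArg (Int.cast : ℤ → 𝓞 L) hxy
    rwa [e] at this
  have hbP : RingOfIntegers.mapRingHom σ b ∉ P := by
    intro hb
    have hcm : (P.comap (RingOfIntegers.mapRingHom σ)) ≠ ⊤ :=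
      (Ideal.IsPrime.comap (RingOfIntegers.mapRingHom σ) (hK := hP)).ne_top
    have := hv.eq_of_le hcm h1
    apply hbv
    rw [this]
    exact hb
  have hp0L : (p : 𝓞 L) ≠ 0 := by exact_mod_cast hp.ne_zero
  have key : (u : 𝓞 L) * RingOfIntegers.mapRingHom σ b
      = RingOfIntegers.mapRingHom σ c * t * RingOfIntegers.mapRingHom σ' a := by
    apply mul_left_cancel₀ hp0L
    have hc' := congrArg (RingOfIntegers.mapRingHom σ) hc
    simp only [map_mul, map_natCast] at hc'
    rw [hu] at ht
    push_cast at ht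
    linear_combination (RingOfIntegers.mapRingHom σ b) * ht +
      t * RingOfIntegers.mapRingHom σ' a * hc'
  have : (u : 𝓞 L) * RingOfIntegers.mapRingHom σ b ∈ P := by
    rw [key]
    exact P.mul_mem_left _ (h2 hav)
  exact (hP.mem_or_mem this).elim huP hbP


/-- Let `K` be a number field, `L` a finite Galois extension of `ℚ` admitting an embedding of
`K`, and `τ` a (`ℚ`-)automorphism of `L`.  Let `p` be a prime unramified in `K` and `v` a
maximal ideal of `𝓞 K` over `p` of residue degree `1`.  If `∏_σ (σ(v)𝓞 L)^{S(σ)}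
= ∏_σ ((τ∘σ)(v)𝓞 L)^{S(σ)}` as fractional ideals of `L`, then `S(τ∘σ) = S(σ)` for every
embedding `σ : K → L`. -/
theorem stmt7 (K L : Type*) [Field K] [NumberField K] [Field L] [NumberField L]
    [IsGalois ℚ L] (hKL : Nonempty (K →+* L)) (τ : L ≃+* L)
    (p : ℕ) (hp : p.Prime)
    (hunr : Squarefree (Ideal.span {(p : 𝓞 K)} : Ideal (𝓞 K)))
    (v : Ideal (𝓞 K)) (hv : v.IsMaximal) (hvp : (p : 𝓞 K) ∈ v)
    (hdeg : Nat.card (𝓞 K ⧸ v) = p)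
    (S : (K →+* L) → ℤ)
    (h : ∏ σ : K →+* L,
          (Ideal.map (RingOfIntegers.mapRingHom σ) v :
            FractionalIdeal (nonZeroDivisors (𝓞 L)) L) ^ S σ
        = ∏ σ : K →+* L,
          (Ideal.map (RingOfIntegers.mapRingHom ((τ : L →+* L).comp σ)) v :
            FractionalIdeal (nonZeroDivisors (𝓞 L)) L) ^ S σ) :
    ∀ σ : K →+* L, S ((τ : L →+* L).comp σ) = S σ := by
  classical
  have hp0 : (p : 𝓞 K) ≠ 0 := by exact_mod_cast hp.ne_zero
  have hp0L : (p : 𝓞 L) ≠ 0 := by exact_mod_cast hp.ne_zero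
  let F : (K →+* L) → Ideal (𝓞 L) := fun σ => Ideal.map (RingOfIntegers.mapRingHom σ) v
  have hF0 : ∀ σ, F σ ≠ 0 := by
    intro σ h0
    have : RingOfIntegers.mapRingHom σ (p : 𝓞 K) ∈ F σ := Ideal.mem_map_of_mem _ hvp
    rw [h0, map_natCast] at this
    exact hp0L (by simpa using this)
  have hF0' : ∀ σ, (F σ : FractionalIdeal (nonZeroDivisors (𝓞 L)) L) ≠ 0 := fun σ =>
    FractionalIdeal.coeIdeal_ne_zero.2 (hF0 σ)
  have hFtop : ∀ σ, F σ ≠ ⊤ := by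
    intro σ htop
    letI : Algebra K L := σ.toAlgebra
    obtain ⟨Q, hQ, hQv⟩ := Ideal.exists_ideal_over_maximal_of_isIntegral (S := 𝓞 L) v (by
      rw [(RingHom.injective_iff_ker_eq_bot _).1
        (FaithfulSMul.algebraMap_injective (𝓞 K) (𝓞 L))]
      exact bot_le)
    apply hQ.ne_top
    rw [eq_top_iff, ← htop]
    exact Ideal.map_le_iff_le_comap.2 hQv.ge
  -- composition with `τ` is a permutation
  let e : (K →+* L) ≃ (K →+* L) :=
    { toFun := fun σ => (τ : L →+* L).comp σ
      invFun := fun σ => (τ.symm : L →+* L).comp σ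
      left_inv := fun σ => by ext; simp
      right_inv := fun σ => by ext; simp }
  have h' : ∏ σ : K →+* L, (F σ : FractionalIdeal (nonZeroDivisors (𝓞 L)) L) ^ S σ
      = ∏ σ : K →+* L, (F σ : FractionalIdeal (nonZeroDivisors (𝓞 L)) L) ^ S (e.symm σ) := by
    refine h.trans ?_
    refine Fintype.prod_equiv e _ _ fun σ => ?_
    rw [Equiv.symm_apply_apply]
    rfl
  have main : ∀ σ₀, S σ₀ = S (e.symm σ₀) := by
    intro σ₀
    obtain ⟨P, hPm, hP⟩ := Ideal.exists_le_maximal _ (hFtop σ₀)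
    let w : IsDedekindDomain.HeightOneSpectrum (𝓞 L) :=
      ⟨P, hPm.isPrime, fun hb => hF0 σ₀ (by simpa [hb] using hP)⟩
    have hcz : ∀ σ, FractionalIdeal.count L w
        (F σ : FractionalIdeal (nonZeroDivisors (𝓞 L)) L) ≠ 0 ↔ F σ ≤ P := by
      intro σ
      rw [FractionalIdeal.count_coe L w (hF0 σ), Nat.cast_ne_zero,
        Associates.count_ne_zero_iff_dvd (hF0 σ) w.irreducible, Ideal.dvd_iff_le]
    have hsum : ∀ f : (K →+* L) → ℤ, FractionalIdeal.count L w
        (∏ σ, (F σ : FractionalIdeal (nonZeroDivisors (𝓞 L)) L) ^ f σ)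
        = f σ₀ * FractionalIdeal.count L w
            (F σ₀ : FractionalIdeal (nonZeroDivisors (𝓞 L)) L) := by
      intro f
      rw [FractionalIdeal.count_prod _ _ _ _ (fun i _ => zpow_ne_zero _ (hF0' i)),
        Finset.sum_eq_single σ₀]
      · rw [FractionalIdeal.count_zpow]
      · intro σ _ hσ
        rw [FractionalIdeal.count_zpow]
        have : ¬ F σ ≤ P := fun hle =>
          hσ (aux_coprime p hp hunr v hv hvp hdeg σ σ₀ P hPm.isPrime hle hP)
        rw [← hcz, not_not] at this
        rw [this, mul_zero]
      · intro hn
        exact absurd (Finset.mem_univ _) hn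
    have hc := congrArg (FractionalIdeal.count L w) h'
    rw [hsum S, hsum (fun σ => S (e.symm σ))] at hc
    exact mul_right_cancel₀ ((hcz σ₀).2 hP) hc
  intro σ
  have := main (e σ)
  rw [Equiv.symm_apply_apply] at this
  exact this
end

section
/- Let g ≥ 1 and n ≥ 1 be integers with φ(n) ≤ 2g, where φ is Euler's totient function, and let p be an odd prime not dividing n. Then the symplectic group Sp_{2g}(𝔽_p) contains an element of multiplicative order exactly n. -/
open Matrix Polynomial

lemma aux_fiber {K : Type*} [Field K] [DecidableEq K] (n : ℕ) (hn : 3 ≤ n) (ζ : K)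
    (hζ : IsPrimitiveRoot ζ n) :
    2 * ((primitiveRoots n K).image (fun z => z + z⁻¹)).card ≤ n.totient := by
  rw [← hζ.card_primitiveRoots, Finset.card_eq_sum_card_image (fun z => z + z⁻¹) (primitiveRoots n K),
    mul_comm, ← smul_eq_mul]
  apply Finset.card_nsmul_le_sum
  intro x hx
  obtain ⟨z, hz, rfl⟩ := Finset.mem_image.1 hx
  have hz' := (mem_primitiveRoots (by omega)).1 hz
  have hne : z ≠ z⁻¹ := by
    intro h
    have h0 : z ≠ 0 := hz'.ne_zero (by omega)
    have : z ^ 2 = 1 := by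
      rw [pow_two]; nth_rewrite 2 [h]; exact mul_inv_cancel₀ h0
    have := Nat.le_of_dvd (by norm_num) (hz'.dvd_of_pow_eq_one 2 this)
    omega
  rw [← Finset.card_pair hne]
  apply Finset.card_le_card
  intro y hy
  simp only [Finset.mem_insert, Finset.mem_singleton] at hy
  rw [Finset.mem_filter]
  rcases hy with rfl | rfl
  · exact ⟨hz, rfl⟩
  · exact ⟨(mem_primitiveRoots (by omega)).2 hz'.inv, by rw [inv_inv, add_comm]⟩

lemma aux_degree {F K : Type*} [Field F] [Field K] [Algebra F K] [IsAlgClosure F K] [PerfectField F]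
    (n : ℕ) (hn : 3 ≤ n) (ζ : K) (hζ : IsPrimitiveRoot ζ n) :
    2 * (minpoly F (ζ + ζ⁻¹)).natDegree ≤ n.totient := by
  classical
  have : IsAlgClosed K := IsAlgClosure.isAlgClosed F
  have : Algebra.IsAlgebraic F K := IsAlgClosure.isAlgebraic
  have : Normal F K := IsAlgClosure.normal F K
  refine le_trans ?_ (aux_fiber n hn ζ hζ)
  have hint : IsIntegral F (ζ + ζ⁻¹) := Algebra.IsIntegral.isIntegral _
  have hsep : (minpoly F (ζ + ζ⁻¹)).Separable :=
    PerfectField.separable_of_irreducible (minpoly.irreducible hint)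
  rw [← Polynomial.card_rootSet_eq_natDegree (K := K) hsep (IsAlgClosed.splits _)]
  rw [← Set.toFinset_card]
  apply Nat.mul_le_mul_left
  apply Finset.card_le_card
  intro x hx
  rw [Set.mem_toFinset, Polynomial.mem_rootSet] at hx
  have hc : IsConjRoot F (ζ + ζ⁻¹) x := by
    rw [isConjRoot_iff_aeval_eq_zero hint]; exact hx.2
  obtain ⟨σ, hσ⟩ := isConjRoot_iff_exists_algEquiv.1 hc.symm
  rw [Finset.mem_image]
  refine ⟨σ ζ, (mem_primitiveRoots (by omega)).2 (hζ.map_of_injective σ.injective), ?_⟩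
  rw [← hσ]; simp

lemma aux_pow {K : Type*} [Field K] (n : ℕ) (hn : 3 ≤ n) (ζ : K) (hζ : IsPrimitiveRoot ζ n) (k : ℕ) :
    (!![0, -1; 1, ζ + ζ⁻¹] : Matrix (Fin 2) (Fin 2) K) ^ k = 1 ↔ ζ ^ k = 1 := by
  have h0 : ζ ≠ 0 := hζ.ne_zero (by omega)
  have hne : ζ - ζ⁻¹ ≠ 0 := by
    intro h
    have h := sub_eq_zero.1 h
    have : ζ ^ 2 = 1 := by
      rw [pow_two]; nth_rewrite 2 [h]; exact mul_inv_cancel₀ h0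
    have := Nat.le_of_dvd (by norm_num) (hζ.dvd_of_pow_eq_one 2 this)
    omega
  set A : Matrix (Fin 2) (Fin 2) K := !![0, -1; 1, ζ + ζ⁻¹] with hA
  set P : Matrix (Fin 2) (Fin 2) K := !![1, 1; -ζ, -ζ⁻¹] with hP
  set D : Matrix (Fin 2) (Fin 2) K := diagonal ![ζ, ζ⁻¹] with hD
  have hPu : IsUnit P := by
    rw [Matrix.isUnit_iff_isUnit_det, isUnit_iff_ne_zero, hP, Matrix.det_fin_two_of]
    convert hne using 1; ring
  have hs : SemiconjBy P D A := by
    unfold SemiconjBy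
    ext i j
    fin_cases i <;> fin_cases j <;>
      simp [hA, hP, hD, Matrix.mul_apply, Fin.sum_univ_two, diagonal] <;> field_simp <;> ring
  have hk := hs.pow_right k
  have hDk : D ^ k = 1 ↔ ζ ^ k = 1 := by
    rw [hD, Matrix.diagonal_pow, ← Matrix.diagonal_one, Matrix.diagonal_injective.eq_iff]
    constructor
    · intro h; simpa using congrFun h 0
    · intro h; ext i; fin_cases i <;> simp [h]
  rw [← hDk]
  constructor
  · intro h
    rw [h, SemiconjBy, one_mul] at hk
    exact hPu.mul_left_cancel (by rw [hk, mul_one])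
  · intro h
    rw [h, SemiconjBy, mul_one] at hk
    exact hPu.mul_right_cancel (by rw [← hk, one_mul])

/-- Blow up a two-by-two matrix along a ring hom to matrices, twisted by `T`. -/
def blow {B F ι : Type*} [CommRing B] [Field F] [Fintype ι] [DecidableEq ι]
    (L : B →+* Matrix ι ι F) (T T' : Matrix ι ι F) (h1 : T * T' = 1) (h2 : T' * T = 1) :
    Matrix (Fin 2) (Fin 2) B →* Matrix (ι ⊕ ι) (ι ⊕ ι) F where
  toFun X := fromBlocks (L (X 0 0)) (L (X 0 1) * T') (T * L (X 1 0)) (T * L (X 1 1) * T')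
  map_one' := by simp [h1, fromBlocks_one]
  map_mul' X Y := by
    have h3 : ∀ Z : Matrix ι ι F, T' * (T * Z) = Z := fun Z => by
      rw [← Matrix.mul_assoc, h2, Matrix.one_mul]
    rw [fromBlocks_multiply]
    simp only [Matrix.mul_apply, Fin.sum_univ_two, map_add, map_mul, Matrix.mul_add, Matrix.add_mul,
      Matrix.mul_assoc, h3]

lemma blow_injective {B F ι : Type*} [CommRing B] [Field F] [Fintype ι] [DecidableEq ι]
    (L : B →+* Matrix ι ι F) (T T' : Matrix ι ι F) (h1 : T * T' = 1) (h2 : T' * T = 1)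
    (hL : Function.Injective L) : Function.Injective (blow L T T' h1 h2) := by
  intro X Y h
  have h3 : ∀ Z : Matrix ι ι F, T' * (T * Z) = Z := fun Z => by
    rw [← Matrix.mul_assoc, h2, Matrix.one_mul]
  have h4 : ∀ Z : Matrix ι ι F, (Z * T') * T = Z := fun Z => by
    rw [Matrix.mul_assoc, h2, Matrix.mul_one]
  obtain ⟨a, b, c, d⟩ := fromBlocks_inj.1 h
  have b := congrArg (· * T) b
  have c := congrArg (T' * ·) c
  have d := congrArg (fun Z => T' * (Z * T)) d
  simp only [h3, h4] at b c d
  ext i j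
  fin_cases i <;> fin_cases j
  · exact hL a
  · exact hL b
  · exact hL c
  · exact hL d

/-- Padding of symplectic matrices by the identity. -/
def padHom (F ι κ : Type*) [Field F] [Fintype ι] [DecidableEq ι] [Fintype κ] [DecidableEq κ] :
    Matrix (ι ⊕ ι) (ι ⊕ ι) F →* Matrix ((ι ⊕ κ) ⊕ (ι ⊕ κ)) ((ι ⊕ κ) ⊕ (ι ⊕ κ)) F where
  toFun X := fromBlocks (fromBlocks X.toBlocks₁₁ 0 0 1) (fromBlocks X.toBlocks₁₂ 0 0 0)
    (fromBlocks X.toBlocks₂₁ 0 0 0) (fromBlocks X.toBlocks₂₂ 0 0 1)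
  map_one' := by
    have h : (1 : Matrix (ι ⊕ ι) (ι ⊕ ι) F) = fromBlocks 1 0 0 1 := fromBlocks_one.symm
    rw [h, toBlocks_fromBlocks₁₁, toBlocks_fromBlocks₁₂, toBlocks_fromBlocks₂₁,
      toBlocks_fromBlocks₂₂, fromBlocks_one, fromBlocks_zero, fromBlocks_one]
  map_mul' X Y := by
    rw [← fromBlocks_toBlocks X, ← fromBlocks_toBlocks Y]
    simp [fromBlocks_multiply, fromBlocks_add]

lemma padHom_injective (F ι κ : Type*) [Field F] [Fintype ι] [DecidableEq ι] [Fintype κ]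
    [DecidableEq κ] : Function.Injective (padHom F ι κ) := by
  intro X Y h
  obtain ⟨a, b, c, d⟩ := fromBlocks_inj.1 h
  rw [← fromBlocks_toBlocks X, ← fromBlocks_toBlocks Y,
    (fromBlocks_inj.1 a).1, (fromBlocks_inj.1 b).1, (fromBlocks_inj.1 c).1, (fromBlocks_inj.1 d).1]

lemma padHom_mem (F ι κ : Type*) [Field F] [Fintype ι] [DecidableEq ι] [Fintype κ]
    [DecidableEq κ] (X : Matrix (ι ⊕ ι) (ι ⊕ ι) F) (hX : X ∈ symplecticGroup ι F) :
    padHom F ι κ X ∈ symplecticGroup (ι ⊕ κ) F := by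
  have hJ : J (ι ⊕ κ) F = fromBlocks 0 (fromBlocks (-1) 0 0 (-1)) (fromBlocks 1 0 0 1) 0 := by
    rw [J, fromBlocks_one, ← fromBlocks_one, fromBlocks_neg]; simp
  rw [SymplecticGroup.mem_iff] at hX ⊢
  rw [← fromBlocks_toBlocks X] at hX
  rw [hJ]
  simp only [J, fromBlocks_multiply, fromBlocks_transpose, fromBlocks_inj] at hX
  obtain ⟨a, b, c, d⟩ := hX
  simp only [Matrix.mul_zero, Matrix.mul_one, Matrix.mul_neg, zero_add, add_zero, Matrix.neg_mul] at a b c d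
  simp only [padHom, MonoidHom.coe_mk, OneHom.coe_mk, fromBlocks_multiply, fromBlocks_transpose,
    fromBlocks_add, transpose_zero, transpose_one, Matrix.mul_zero, Matrix.zero_mul, Matrix.mul_one,
    Matrix.mul_neg, Matrix.neg_mul, zero_add, add_zero, neg_zero, a, b, c, d, fromBlocks_zero]

lemma reindex_mem {F ι κ : Type*} [Field F] [Fintype ι] [DecidableEq ι] [Fintype κ]
    [DecidableEq κ] (e : ι ≃ κ) (X : Matrix (ι ⊕ ι) (ι ⊕ ι) F) (hX : X ∈ symplecticGroup ι F) :
    reindexAlgEquiv F F (e.sumCongr e) X ∈ symplecticGroup κ F := by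
  have hJ : J κ F = reindexAlgEquiv F F (e.sumCongr e) (J ι F) := by
    ext i j
    rcases i with i | i <;> rcases j with j | j <;> simp [J, Matrix.one_apply]
  rw [SymplecticGroup.mem_iff] at hX ⊢
  have ht : (reindexAlgEquiv F F (e.sumCongr e) X)ᵀ = reindexAlgEquiv F F (e.sumCongr e) Xᵀ := rfl
  rw [hJ, ht, ← map_mul, ← map_mul, hX]

lemma aux_exists {F K : Type*} [Field F] [Field K] [Algebra F K] [IsAlgClosure F K] [PerfectField F]
    (n : ℕ) (hn : 3 ≤ n) (ζ : K) (hζ : IsPrimitiveRoot ζ n) :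
    ∃ k : ℕ, 2 * k ≤ n.totient ∧ ∃ X ∈ symplecticGroup (Fin k) F, orderOf X = n := by
  have : Algebra.IsAlgebraic F K := IsAlgClosure.isAlgebraic
  set t : K := ζ + ζ⁻¹ with ht
  have hint : IsIntegral F t := Algebra.IsIntegral.isIntegral _
  let B := IntermediateField.adjoin F {t}
  have : FiniteDimensional F B := IntermediateField.adjoin.finiteDimensional hint
  have hfr : Module.finrank F B = (minpoly F t).natDegree := IntermediateField.adjoin.finrank hint
  let b := Module.finBasis F B
  refine ⟨Module.finrank F B, by rw [hfr]; exact aux_degree n hn ζ hζ, ?_⟩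
  let L : B →+* Matrix (Fin (Module.finrank F B)) (Fin (Module.finrank F B)) F :=
    (Algebra.leftMulMatrix b).toRingHom
  have hL : Function.Injective L := Algebra.leftMulMatrix_injective b
  let T := Algebra.traceMatrix F b
  have hT : IsUnit T.det := by
    rw [isUnit_iff_ne_zero]
    have := (LinearMap.BilinForm.nondegenerate_iff_det_ne_zero b).1 (traceForm_nondegenerate F B)
    rwa [← Algebra.traceMatrix_of_basis] at this
  have h1 : T * T⁻¹ = 1 := Matrix.mul_nonsing_inv _ hT
  have h2 : T⁻¹ * T = 1 := Matrix.nonsing_inv_mul _ hT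
  have hTs : Tᵀ = T := by
    ext i j; simp [T, Algebra.traceMatrix_apply, Algebra.traceForm_apply, mul_comm]
  have hTL : ∀ x, T * L x = (L x)ᵀ * T := by
    intro x
    have key : ∀ i j, (T * L x) i j = Algebra.trace F B (x * b j * b i) := by
      intro i j
      have h := congrFun (Algebra.traceMatrix_of_basis_mulVec b (x * b j)) i
      rw [← h, Matrix.mul_apply, Matrix.mulVec, dotProduct]
      refine Finset.sum_congr rfl fun k _ => ?_
      have : L x k j = b.repr (x * b j) k := Algebra.leftMulMatrix_eq_repr_mul b x k j
      rw [this]; rfl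
    have h3 : (L x)ᵀ * T = (T * L x)ᵀ := by rw [Matrix.transpose_mul, hTs]
    ext i j
    rw [h3, Matrix.transpose_apply, key, key, mul_right_comm]
  let t' : B := ⟨t, IntermediateField.mem_adjoin_simple_self F t⟩
  let A : Matrix (Fin 2) (Fin 2) B := !![0, -1; 1, t']
  refine ⟨blow L T T⁻¹ h1 h2 A, ?_, ?_⟩
  · have e : blow L T T⁻¹ h1 h2 A = fromBlocks 0 (-T⁻¹) T (L t')ᵀ := by
      have : T * L t' * T⁻¹ = (L t')ᵀ := by rw [hTL, Matrix.mul_assoc, h1, Matrix.mul_one]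
      simp [blow, A, this]
    have hTi : (T⁻¹)ᵀ = T⁻¹ := by rw [Matrix.transpose_nonsing_inv, hTs]
    rw [SymplecticGroup.mem_iff, e, J]
    simp [fromBlocks_multiply, fromBlocks_transpose, hTi, hTs, h1, h2, hTL]
  · rw [orderOf_injective _ (blow_injective L T T⁻¹ h1 h2 hL)]
    have hinj : Function.Injective ((algebraMap B K).mapMatrix (m := Fin 2)) := 
      Matrix.map_injective (algebraMap B K).injective
    rw [← orderOf_injective ((algebraMap B K).mapMatrix (m := Fin 2)).toMonoidHom hinj, hζ.eq_orderOf]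
    apply orderOf_eq_orderOf_iff.2
    intro k
    rw [← aux_pow n hn ζ hζ]
    have : ((algebraMap B K).mapMatrix (m := Fin 2)).toMonoidHom A = !![0, -1; 1, ζ + ζ⁻¹] := by
      ext i j
      fin_cases i <;> fin_cases j <;> simp [A, t', ht]
    rw [this]

/-- If `φ(n) ≤ 2g` and `p` is an odd prime not dividing `n`, then the symplectic group
`Sp_{2g}(𝔽_p)` contains an element of multiplicative order exactly `n`. -/
theorem stmt8 (g n : ℕ) (hg : 1 ≤ g) (hn : 1 ≤ n) (hφ : Nat.totient n ≤ 2 * g)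
    (p : ℕ) (hp : p.Prime) (hodd : p ≠ 2) (hpn : ¬ p ∣ n) :
    ∃ M : Matrix.symplecticGroup (Fin g) (ZMod p), orderOf M = n := by
  have : Fact p.Prime := ⟨hp⟩
  suffices h : ∃ X ∈ symplecticGroup (Fin g) (ZMod p), orderOf X = n by
    obtain ⟨X, hX, h⟩ := h
    exact ⟨⟨X, hX⟩, by rw [← h, ← orderOf_submonoid]⟩
  rcases (by omega : n = 1 ∨ n = 2 ∨ 3 ≤ n) with rfl | rfl | hn3
  · exact ⟨1, one_mem _, orderOf_one⟩
  · refine ⟨-1, SymplecticGroup.neg_mem (one_mem _), ?_⟩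
    rw [orderOf_eq_prime_iff]
    refine ⟨by simp, ?_⟩
    intro h
    have h := congrFun (congrFun h (Sum.inl ⟨0, hg⟩)) (Sum.inl ⟨0, hg⟩)
    have : Fact (2 < p) := ⟨by have := hp.two_le; omega⟩
    simp only [Matrix.neg_apply, Matrix.one_apply_eq] at h
    exact ZMod.neg_one_ne_one h
  · have : NeZero (n : AlgebraicClosure (ZMod p)) := ⟨by
      rw [Ne, CharP.cast_eq_zero_iff (AlgebraicClosure (ZMod p)) p]; exact hpn⟩
    obtain ⟨ζ, hζ⟩ := HasEnoughRootsOfUnity.exists_primitiveRoot (AlgebraicClosure (ZMod p)) n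
    obtain ⟨k, hk, X, hX, hX'⟩ := aux_exists (F := ZMod p) n hn3 ζ hζ
    have e : Fin k ⊕ Fin (g - k) ≃ Fin g := finSumFinEquiv.trans (finCongr (by omega))
    refine ⟨_, reindex_mem e _ (padHom_mem _ _ (Fin (g - k)) X hX), ?_⟩
    rw [← hX', ← orderOf_injective _ (padHom_injective (ZMod p) (Fin k) (Fin (g - k))) X]
    exact MulEquiv.orderOf_eq (reindexAlgEquiv (ZMod p) (ZMod p) (e.sumCongr e)).toMulEquiv _
end

section
/- Let g ≥ 1. Call a positive integer n admissible for g if for all but at most one odd prime p the symplectic group Sp_{2g}(𝔽_p) contains an element of multiplicative order n (i.e., there exists an odd prime p₀ such that for every odd prime p ≠ p₀, Sp_{2g}(𝔽_p) has an element of order n). Then the set of integers admissible for g is finite, and its least common multiple c_g equals the product ∏ p^k taken over all prime powers p^k (p prime, k ≥ 1) satisfying (p−1)p^{k−1} ≤ 2g < (p−1)p^k. -/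
/-- An integer `n ≥ 1` is admissible for `g` if for all but at most one odd prime `p`,
the symplectic group `Sp_{2g}(𝔽_p)` contains an element of order `n`. -/
def AdmissibleForG (g : ℕ) : Set ℕ :=
  {n | 0 < n ∧ ∃ p₀ : ℕ, p₀.Prime ∧ p₀ ≠ 2 ∧
    ∀ p : ℕ, p.Prime → p ≠ 2 → p ≠ p₀ →
      ∃ M : Matrix.symplecticGroup (Fin g) (ZMod p), orderOf M = n}

open Matrix Polynomial

namespace SpOrder

def shiftN (g : ℕ) (R : Type*) [CommRing R] : Matrix (Fin g) (Fin g) R :=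
  Matrix.of fun i j => if (i : ℕ) = j + 1 then 1 else 0

def cornerC (g : ℕ) (R : Type*) [CommRing R] : Matrix (Fin g) (Fin g) R :=
  Matrix.of fun i j => if (i : ℕ) = 0 ∧ (j : ℕ) + 1 = g then 1 else 0

lemma sum_shift {g : ℕ} {R : Type*} [CommRing R] (f : ℕ → R) (j : Fin g) :
    ∑ i : Fin g, f i * shiftN g R i j = if (j : ℕ) + 1 < g then f (j + 1) else 0 := by
  split_ifs with h
  · rw [Finset.sum_eq_single (⟨j + 1, h⟩ : Fin g)]
    · simp [shiftN]
    · intro b _ hb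
      have : (b : ℕ) ≠ j + 1 := fun h' => hb (Fin.ext h')
      simp [shiftN, this]
    · simp
  · apply Finset.sum_eq_zero
    intro i _
    have : (i : ℕ) ≠ j + 1 := by omega
    simp [shiftN, this]

lemma sum_corner {g : ℕ} {R : Type*} [CommRing R] (f : ℕ → R) (j : Fin g) :
    ∑ i : Fin g, f i * cornerC g R i j = if (j : ℕ) + 1 = g then f 0 else 0 := by
  have hg : 0 < g := j.pos
  rw [Finset.sum_eq_single (⟨0, hg⟩ : Fin g)]
  · simp [cornerC]
  · intro b _ hb
    have : (b : ℕ) ≠ 0 := fun h' => hb (Fin.ext h')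
    simp only [cornerC, Matrix.of_apply, this, false_and, if_false, mul_zero]
  · simp

def baseM (g : ℕ) (R : Type*) [CommRing R] : Matrix (Fin g ⊕ Fin g) (Fin g ⊕ Fin g) R :=
  fromBlocks (shiftN g R) (-cornerC g R) (cornerC g R) (shiftN g R)

lemma shiftT_corner (g : ℕ) (R : Type*) [CommRing R] :
    (shiftN g R)ᵀ * cornerC g R = 0 := by
  ext i j
  have := sum_corner (g := g) (R := R) (fun k => if k = i + 1 then 1 else 0) j
  simp only [Matrix.mul_apply, Matrix.transpose_apply]
  simpa [shiftN] using this

lemma cornerT_shift (g : ℕ) (R : Type*) [CommRing R] :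
    (cornerC g R)ᵀ * shiftN g R = 0 := by
  have := congrArg Matrix.transpose (shiftT_corner g R)
  simpa using this

lemma shiftT_shift (g : ℕ) (R : Type*) [CommRing R] :
    (shiftN g R)ᵀ * shiftN g R + (cornerC g R)ᵀ * cornerC g R = 1 := by
  ext i j
  have h1 := sum_shift (g := g) (R := R) (fun k => if k = i + 1 then 1 else 0) j
  have h2 := sum_corner (g := g) (R := R)
    (fun k => if k = 0 ∧ (i : ℕ) + 1 = g then 1 else 0) j
  simp only [Matrix.add_apply, Matrix.mul_apply, Matrix.transpose_apply]
  have e1 : ∀ k : Fin g, shiftN g R k i = if (k : ℕ) = i + 1 then 1 else 0 := fun k => rfl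
  have e2 : ∀ k : Fin g, cornerC g R k i =
    if (k : ℕ) = 0 ∧ (i : ℕ) + 1 = g then 1 else 0 := fun k => rfl
  simp only [e1, e2]
  rw [h1, h2, Matrix.one_apply]
  have hi := i.2
  have hj := j.2
  simp only [Fin.ext_iff]
  simp only [true_and]
  split_ifs <;> first | omega | simp

lemma baseM_mem (g : ℕ) (R : Type*) [CommRing R] : baseM g R ∈ symplecticGroup (Fin g) R := by
  rw [baseM, SymplecticGroup.fromBlocks_mem_iff]
  refine ⟨?_, ?_, ?_⟩
  · rw [shiftT_corner, cornerT_shift]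
  · simp [shiftT_corner, cornerT_shift]
  · simpa using shiftT_shift g R

lemma shear_mem {g : ℕ} {R : Type*} [CommRing R] (S : Matrix (Fin g) (Fin g) R) (hS : Sᵀ = S) :
    (fromBlocks 1 S 0 1 : Matrix (Fin g ⊕ Fin g) (Fin g ⊕ Fin g) R) ∈ symplecticGroup (Fin g) R := by
  rw [SymplecticGroup.fromBlocks_mem_iff]
  simp [hS]

/-- The sequence of entries of the left eigenvector. -/
def useq {K : Type*} [Field K] (z : K) (g : ℕ) (w : ℕ → K) : ℕ → K
  | 0 => z ^ g
  | (j + 1) => z * useq z g w j - z * w j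

lemma useq_eq {K : Type*} [Field K] (z : K) (hz : z ≠ 0) (g : ℕ) (w : ℕ → K) (j : ℕ) :
    useq z g w j = z ^ j * (z ^ g - ∑ i ∈ Finset.range j, (z⁻¹) ^ i * w i) := by
  induction j with
  | zero => simp [useq]
  | succ j ih =>
    rw [useq, ih, Finset.sum_range_succ]
    have : z ^ (j+1) * (z⁻¹ ^ j * w j) = z * w j := by
      rw [pow_succ, inv_pow]; field_simp
    rw [← sub_sub, mul_sub _ _ (z⁻¹ ^ j * w j), this]; ring

lemma left_eigen {K : Type*} [Field K] {g : ℕ} (z : K) (hz : z ≠ 0)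
    (S : Matrix (Fin g) (Fin g) K)
    (h : ∑ i, ∑ j, S i j * (z ^ (i : ℕ) * z⁻¹ ^ (j : ℕ)) = z ^ g + z⁻¹ ^ g) (hg : 1 ≤ g) :
    ∃ v : Fin g ⊕ Fin g → K, v ≠ 0 ∧ v ᵥ* (baseM g K * fromBlocks 1 S 0 1) = z • v := by
  classical
  set w : ℕ → K := fun j => if hj : j < g then ∑ i : Fin g, z ^ (i : ℕ) * S i ⟨j, hj⟩ else 0 with hw
  have hu : useq z g w g = -1 := by
    rw [useq_eq z hz, Finset.sum_range]
    have : ∑ i : Fin g, z⁻¹ ^ (i : ℕ) * w i = z ^ g + z⁻¹ ^ g := by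
      rw [← h, Finset.sum_comm]
      refine Finset.sum_congr rfl fun j _ => ?_
      simp only [hw, j.2, dif_pos, Finset.mul_sum]
      refine Finset.sum_congr rfl fun i _ => ?_
      ring
    rw [this, inv_pow]
    field_simp
    ring
  set v : Fin g ⊕ Fin g → K := Sum.elim (fun i => z ^ (i : ℕ)) (fun j => useq z g w j) with hv
  refine ⟨v, ?_, ?_⟩
  · intro h0
    have := congrFun h0 (Sum.inl ⟨0, hg⟩)
    simp [hv] at this
  · have h1 : v ᵥ* baseM g K = Sum.elim (fun i : Fin g => z ^ ((i : ℕ) + 1))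
        (fun j : Fin g => useq z g w ((j : ℕ) + 1)) := by
      ext (j | j)
      · have a := sum_shift (g := g) (fun i => z ^ i) j
        have b := sum_corner (g := g) (fun i => useq z g w i) j
        simp only [Matrix.vecMul, dotProduct, Fintype.sum_sum_type, baseM, hv, Sum.elim_inl,
          Sum.elim_inr, fromBlocks_apply₁₁, fromBlocks_apply₂₁]
        rw [a, b]
        have hj := j.2
        split_ifs with c d d
        · omega
        · simp
        · simp [useq, d]
        · omega
      · have a := sum_corner (g := g) (fun i => z ^ i) j
        have b := sum_shift (g := g) (fun i => useq z g w i) j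
        simp only [Matrix.vecMul, dotProduct, Fintype.sum_sum_type, baseM, hv, Sum.elim_inl,
          Sum.elim_inr, fromBlocks_apply₁₂, fromBlocks_apply₂₂, Matrix.neg_apply, mul_neg,
          Finset.sum_neg_distrib]
        rw [a, b]
        have hj := j.2
        split_ifs with c d d
        · omega
        · simp [c, hu]
        · simp
        · omega
    rw [← Matrix.vecMul_vecMul, h1]
    ext (j | j)
    · simp [Matrix.vecMul, dotProduct, Fintype.sum_sum_type, hv, Matrix.one_apply, pow_succ']
    · simp only [Matrix.vecMul, dotProduct, Fintype.sum_sum_type, hv, Sum.elim_inl, Sum.elim_inr,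
        fromBlocks_apply₁₂, fromBlocks_apply₂₂, Matrix.one_apply, Pi.smul_apply, smul_eq_mul]
      simp only [mul_ite, mul_one, mul_zero, Finset.sum_ite_eq', Finset.mem_univ, if_true]
      rw [useq]
      simp only [hw, j.2, dif_pos, Finset.mul_sum, pow_succ', mul_assoc]
      ring

lemma exists_order {F K : Type*} [Field F] [Finite F] [Field K] [Algebra F K] {g : ℕ} (hg : 1 ≤ g)
    (z : K) (n : ℕ) (hn : 0 < n) (hz : IsPrimitiveRoot z n)
    (S : Matrix (Fin g) (Fin g) F) (hS : Sᵀ = S)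
    (h : ∑ i, ∑ j, S i j • (z ^ (i : ℕ) * z⁻¹ ^ (j : ℕ)) = z ^ g + z⁻¹ ^ g) :
    ∃ M : symplecticGroup (Fin g) F, orderOf M = n := by
  classical
  have hz0 : z ≠ 0 := hz.ne_zero hn.ne'
  set M : symplecticGroup (Fin g) F :=
    ⟨baseM g F, baseM_mem g F⟩ * ⟨fromBlocks 1 S 0 1, shear_mem S hS⟩ with hM
  have hmap : (algebraMap F K).mapMatrix (M : Matrix (Fin g ⊕ Fin g) (Fin g ⊕ Fin g) F) =
      baseM g K * fromBlocks 1 (S.map (algebraMap F K)) 0 1 := by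
    rw [hM, Submonoid.coe_mul, map_mul]
    congr 1
    · simp only [baseM, RingHom.mapMatrix_apply, fromBlocks_map]
      congr 1 <;> ext i j <;> simp [shiftN, cornerC, apply_ite (algebraMap F K)]
    · simp [RingHom.mapMatrix_apply, fromBlocks_map]
  obtain ⟨v, hv0, hv⟩ := left_eigen z hz0 (S.map (algebraMap F K))
    (by simpa [Algebra.smul_def] using h) hg
  rw [← hmap] at hv
  set A := (algebraMap F K).mapMatrix (M : Matrix (Fin g ⊕ Fin g) (Fin g ⊕ Fin g) F) with hA
  have hpow : ∀ k : ℕ, v ᵥ* A ^ k = z ^ k • v := by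
    intro k
    induction k with
    | zero => simp
    | succ k ih =>
      rw [pow_succ, ← Matrix.vecMul_vecMul, ih, Matrix.smul_vecMul, hv, smul_smul, pow_succ]
  have hdvd : n ∣ orderOf M := by
    apply hz.dvd_of_pow_eq_one
    have h1 := hpow (orderOf M)
    have h2 : A ^ orderOf M = 1 := by
      rw [hA, ← map_pow, ← SubmonoidClass.coe_pow, pow_orderOf_eq_one]; simp
    rw [h2, Matrix.vecMul_one] at h1
    obtain ⟨i, hi⟩ := Function.ne_iff.mp hv0
    have h3 := congrFun h1 i
    simp only [Pi.smul_apply, smul_eq_mul] at h3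
    have hi' : v i ≠ 0 := hi
    exact (mul_right_cancel₀ hi' (by rw [one_mul]; exact h3)).symm
  have hpos : 0 < orderOf M := orderOf_pos M
  obtain ⟨c, hc⟩ := hdvd
  refine ⟨M ^ c, ?_⟩
  have hc0 : c ≠ 0 := by rintro rfl; rw [mul_zero] at hc; omega
  rw [orderOf_pow_of_dvd hc0 ⟨n, by rw [hc, mul_comm]⟩, hc]
  exact Nat.mul_div_cancel _ (Nat.pos_of_ne_zero hc0)

end SpOrder

namespace SpOrder

def tt {K : Type*} [Field K] (z : K) (j : ℕ) : K := z ^ j + z⁻¹ ^ j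

def LL (F : Type*) {K : Type*} [Field F] [Field K] [Algebra F K] (z : K) (g : ℕ) : Submodule F K :=
  Submodule.span F (Set.image (tt z) (Set.Iio g))

lemma tt_mem (F : Type*) {K : Type*} [Field F] [Field K] [Algebra F K] (z : K) {j g : ℕ}
    (h : j < g) : tt z j ∈ LL F z g :=
  Submodule.subset_span ⟨j, h, rfl⟩

lemma LL_mono (F : Type*) {K : Type*} [Field F] [Field K] [Algebra F K] (z : K) {a b : ℕ}
    (h : a ≤ b) : LL F z a ≤ LL F z b :=
  Submodule.span_mono (Set.image_mono (Set.Iio_subset_Iio h))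

lemma tt_mul {K : Type*} [Field K] (z : K) (hz : z ≠ 0) (j : ℕ) :
    tt z 1 * tt z (j + 1) = tt z (j + 2) + tt z j := by
  simp only [tt, inv_pow, pow_succ]
  field_simp
  ring

lemma mul_mem_LL {F K : Type*} [Field F] [Field K] [Algebra F K] (z : K) (hz : z ≠ 0) {g : ℕ}
    {x : K} (hx : x ∈ LL F z g) : tt z 1 * x ∈ LL F z (g + 1) := by
  induction hx using Submodule.span_induction with
  | mem x hx =>
    obtain ⟨j, hj, rfl⟩ := hx
    have hj : j < g := hj
    rcases j with _ | j
    · have : tt z 1 * tt z 0 = tt z 1 + tt z 1 := by simp [tt]; ring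
      rw [this]
      exact add_mem (tt_mem F z (by omega)) (tt_mem F z (by omega))
    · rw [tt_mul z hz]
      exact add_mem (tt_mem F z (by omega)) (tt_mem F z (by omega))
  | zero => simp
  | add x y _ _ hx hy => rw [mul_add]; exact add_mem hx hy
  | smul a x _ hx => rw [mul_smul_comm]; exact Submodule.smul_mem _ _ hx

lemma tt_mem_LL {F K : Type*} [Field F] [Field K] [Algebra F K] (z : K) (hz : z ≠ 0) {h g : ℕ}
    (h1 : 1 ≤ h) (hb : tt z h ∈ LL F z h) (hg : h ≤ g) : tt z g ∈ LL F z g := by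
  induction g, hg using Nat.le_induction with
  | base => exact hb
  | succ g hle ih =>
    have h2 := mul_mem_LL z hz ih
    obtain ⟨j, rfl⟩ : ∃ j, g = j + 1 := ⟨g - 1, by omega⟩
    rw [tt_mul z hz] at h2
    have h3 : tt z j ∈ LL F z (j + 1 + 1) := tt_mem F z (by omega)
    simpa using sub_mem h2 h3

lemma exists_S {F K : Type*} [Field F] [Field K] [Algebra F K] (z : K)
    {g : ℕ} (hg : 1 ≤ g) {x : K} (hx : x ∈ LL F z g) :
    ∃ S : Matrix (Fin g) (Fin g) F, Sᵀ = S ∧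
      ∑ i, ∑ j, S i j • (z ^ (i : ℕ) * z⁻¹ ^ (j : ℕ)) = x := by
  classical
  induction hx using Submodule.span_induction with
  | mem x hx =>
    obtain ⟨j, hj, rfl⟩ := hx
    have hj : j < g := hj
    refine ⟨Matrix.single ⟨j, hj⟩ ⟨0, hg⟩ 1 + Matrix.single ⟨0, hg⟩ ⟨j, hj⟩ 1, ?_, ?_⟩
    · rw [Matrix.transpose_add, Matrix.transpose_single, Matrix.transpose_single, add_comm]
    · have key : ∀ (a b : Fin g) (c : Fin g → Fin g → K),
          ∑ i, ∑ j, (Matrix.single a b (1 : F)) i j • c i j = c a b := by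
        intro a b c
        rw [Finset.sum_eq_single a, Finset.sum_eq_single b]
        · simp
        · intro b' _ hb; simp [hb.symm]
        · simp
        · intro b' _ hb; simp [hb.symm]
        · simp
      simp only [Matrix.add_apply, add_smul, Finset.sum_add_distrib]
      rw [key, key]
      simp [tt]
  | zero => exact ⟨0, by simp, by simp⟩
  | add x y _ _ hx hy =>
    obtain ⟨S, h1, h2⟩ := hx
    obtain ⟨T, h3, h4⟩ := hy
    refine ⟨S + T, by rw [Matrix.transpose_add, h1, h3], ?_⟩
    simp only [Matrix.add_apply, add_smul, Finset.sum_add_distrib, h2, h4]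
  | smul a x _ hx =>
    obtain ⟨S, h1, h2⟩ := hx
    refine ⟨a • S, by rw [Matrix.transpose_smul, h1], ?_⟩
    simp only [Matrix.smul_apply, smul_assoc, ← Finset.smul_sum, h2]

lemma geom_tt {K : Type*} [Field K] (y : K) (hy : y ≠ 0) (r : ℕ) :
    ∑ i ∈ Finset.range (2 * r + 1), y ^ i =
      y ^ r * (1 + ∑ i ∈ Finset.range r, tt y (i + 1)) := by
  induction r with
  | zero => simp
  | succ r ih =>
    rw [show 2 * (r + 1) + 1 = (2 * r + 1) + 1 + 1 by ring, Finset.sum_range_succ', Finset.sum_range_succ, Finset.sum_range_succ (fun i => tt y (i+1))]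
    have : ∑ i ∈ Finset.range (2 * r + 1), y ^ (i + 1) = y * ∑ i ∈ Finset.range (2 * r + 1), y ^ i := by
      rw [Finset.mul_sum]; exact Finset.sum_congr rfl fun i _ => by ring
    rw [this, ih, tt, inv_pow]
    field_simp
    ring

/-- Base case: for a prime power there is a relation of the right degree. -/
lemma base_case {F K : Type*} [Field F] [Field K] [Algebra F K] (h2 : (2 : F) ≠ 0) (z : K)
    {l k g : ℕ} (hl : l.Prime) (hz : IsPrimitiveRoot z (l ^ (k + 1))) (hg : 1 ≤ g)
    (hle : (l - 1) * l ^ k ≤ 2 * g) :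
    ∃ h, 1 ≤ h ∧ h ≤ g ∧ tt z h ∈ LL F z h := by
  have hz0 : z ≠ 0 := hz.ne_zero (pow_pos hl.pos _).ne'
  have hprim : IsPrimitiveRoot (z ^ l ^ k) l :=
    hz.pow (pow_pos hl.pos _) (by rw [pow_succ])
  rcases hl.eq_two_or_odd' with rfl | ⟨r, rfl⟩
  · have hneg : z ^ 2 ^ k = -1 := hprim.eq_neg_one_of_two_right
    rcases k with _ | k
    · refine ⟨1, le_rfl, hg, ?_⟩
      have hz1 : z = -1 := by simpa using hneg
      have : tt z 1 = -tt z 0 := by simp [tt, hz1]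
      rw [this]
      exact neg_mem (tt_mem F z (by omega))
    · refine ⟨2 ^ k, Nat.one_le_two_pow, ?_, ?_⟩
      · rw [pow_succ] at hle; omega
      · have : tt z (2 ^ k) = 0 := by
          rw [pow_succ, pow_mul] at hneg
          rw [tt, inv_pow]
          have hne : z ^ 2 ^ k ≠ 0 := pow_ne_zero _ hz0
          field_simp
          rw [hneg]; ring
        rw [this]; exact zero_mem _
  · set m := (2 * r + 1) ^ k with hm
    have hmpos : 0 < m := pow_pos hl.pos _
    have hr : 1 ≤ r := by
      rcases r with _ | r
      · exact absurd hl (by norm_num)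
      · omega
    obtain ⟨s, rfl⟩ : ∃ s, r = s + 1 := ⟨r - 1, by omega⟩
    have hsum := hprim.geom_sum_eq_zero (by omega)
    rw [geom_tt _ (pow_ne_zero _ hz0)] at hsum
    have hy : (z ^ m) ^ (s + 1) ≠ 0 := pow_ne_zero _ (pow_ne_zero _ hz0)
    have h3 := (mul_eq_zero.mp hsum).resolve_left hy
    have htt : ∀ i, tt (z ^ m) i = tt z (m * i) := by
      intro i; simp only [tt, inv_pow, pow_mul]
    simp only [htt] at h3
    rw [Finset.sum_range_succ] at h3
    refine ⟨m * (s + 1), by nlinarith, ?_, ?_⟩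
    · have : (2 * (s + 1) + 1 - 1) * m = 2 * (m * (s + 1)) := by
        rw [Nat.add_sub_cancel]; ring
      omega
    · have h4 : tt z (m * (s + 1)) = -(1 + ∑ i ∈ Finset.range s, tt z (m * (i + 1))) := by
        linear_combination h3
      rw [h4]
      refine neg_mem (add_mem ?_ (sum_mem fun i hi => tt_mem F z ?_))
      · have h5 : (1 : K) = (2 : F)⁻¹ • tt z 0 := by
          have : tt z 0 = (2 : F) • (1 : K) := by
            rw [Algebra.smul_def, map_ofNat]; simp [tt]; norm_num
          rw [this, smul_smul, inv_mul_cancel₀ h2, one_smul]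
        rw [h5]
        exact Submodule.smul_mem _ _ (tt_mem F z (by positivity))
      · have := Finset.mem_range.mp hi
        exact Nat.mul_lt_mul_of_pos_left (by omega) hmpos

end SpOrder

namespace SpOrder

lemma exists_gen (l b : ℕ) (hl : l.Prime) :
    ∃ a : (ZMod (l ^ b))ˣ, ∀ u : (ZMod (l ^ b))ˣ, ∃ k : ℕ, u = a ^ k ∨ u = -a ^ k := by
  have : NeZero (l ^ b) := ⟨(pow_pos hl.pos _).ne'⟩
  have cyc : IsCyclic (ZMod (l ^ b))ˣ → ∃ a : (ZMod (l ^ b))ˣ, ∀ u : (ZMod (l ^ b))ˣ,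
      ∃ k : ℕ, u = a ^ k ∨ u = -a ^ k := by
    rintro ⟨a, ha⟩
    refine ⟨a, fun u => ?_⟩
    have : u ∈ Subgroup.zpowers a := ha u
    rw [← mem_powers_iff_mem_zpowers] at this
    obtain ⟨k, hk⟩ := this
    exact ⟨k, Or.inl hk.symm⟩
  by_cases hl2 : l = 2
  · subst hl2
    by_cases hb : b ≤ 2
    · exact cyc ((ZMod.isCyclic_units_two_pow_iff b).mpr hb)
    · obtain ⟨n, rfl⟩ : ∃ n, b = n + 2 := ⟨b - 2, by omega⟩
      have h5 : IsUnit (5 : ZMod (2 ^ (n + 2))) := by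
        have := (ZMod.isUnit_iff_coprime 5 (2 ^ (n + 2))).mpr (Nat.Coprime.pow_right _ (by norm_num))
        exact_mod_cast this
      obtain ⟨a, ha⟩ := h5
      have hord : orderOf a = 2 ^ n := by
        rw [← orderOf_units, ha, ZMod.orderOf_five]
      have hcard : Nat.card (ZMod (2 ^ (n + 2)))ˣ = 2 ^ (n + 1) := by
        rw [Nat.card_eq_fintype_card, ZMod.card_units_eq_totient,
          Nat.totient_prime_pow Nat.prime_two (by omega)]
        simp
      have hidx : (Subgroup.zpowers a).index = 2 := by
        have := (Subgroup.zpowers a).card_mul_index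
        rw [Nat.card_zpowers, hord, hcard] at this
        have h2 : 2 ^ (n + 1) = 2 ^ n * 2 := pow_succ 2 n
        exact Nat.eq_of_mul_eq_mul_left (by positivity) (this.trans h2)
      have hneg : (-1 : (ZMod (2 ^ (n + 2)))ˣ) ∉ Subgroup.zpowers a := by
        rw [← mem_powers_iff_mem_zpowers]
        rintro ⟨k, hk⟩
        have hk' : (5 : ZMod (2 ^ (n + 2))) ^ k = -1 := by
          have := congrArg Units.val hk
          simpa [ha] using this
        have hd : 4 ∣ 2 ^ (n + 2) := ⟨2 ^ n, by ring⟩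
        have h4 := congrArg (ZMod.castHom hd (ZMod 4)) hk'
        rw [map_pow, map_neg, map_one, map_ofNat] at h4
        have h51 : (5 : ZMod 4) = 1 := by decide
        rw [h51, one_pow] at h4
        exact absurd h4 (by decide)
      refine ⟨a, fun u => ?_⟩
      by_cases hu : u ∈ Subgroup.zpowers a
      · rw [← mem_powers_iff_mem_zpowers] at hu
        obtain ⟨k, hk⟩ := hu
        exact ⟨k, Or.inl hk.symm⟩
      · have : -1 * u ∈ Subgroup.zpowers a := by
          rw [Subgroup.mul_mem_iff_of_index_two hidx]; tauto
        rw [← mem_powers_iff_mem_zpowers] at this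
        obtain ⟨k, hk⟩ := this
        refine ⟨k, Or.inr ?_⟩
        have hk : a ^ k = -1 * u := hk
        rw [hk]; simp
  · exact cyc (ZMod.isCyclic_units_of_prime_pow l hl hl2 b)

lemma spectrum_frob {p : ℕ} [Fact p.Prime] {K : Type*} [Field K] [Algebra (ZMod p) K]
    {m : Type*} [Fintype m] [DecidableEq m] (M : Matrix m m (ZMod p)) (x : K)
    (hx : (M.charpoly.map (algebraMap (ZMod p) K)).IsRoot x) :
    (M.charpoly.map (algebraMap (ZMod p) K)).IsRoot (x ^ p) := by
  have : CharP K p := charP_of_injective_algebraMap (algebraMap (ZMod p) K).injective p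
  have : ExpChar K p := ExpChar.prime Fact.out
  rw [IsRoot.def, eval_map_algebraMap] at hx ⊢
  have h := ZMod.expand_card (M.charpoly)
  have := congrArg (aeval x) h
  rw [expand_aeval, map_pow, hx, zero_pow (Fact.out : p.Prime).ne_zero] at this
  exact this

lemma spectrum_inv {F K : Type*} [Field F] [Field K] [Algebra F K] {g : ℕ}
    (M : symplecticGroup (Fin g) F) (x : K)
    (hx : ((M : Matrix (Fin g ⊕ Fin g) (Fin g ⊕ Fin g) F).charpoly.map (algebraMap F K)).IsRoot x) :
    ((M : Matrix (Fin g ⊕ Fin g) (Fin g ⊕ Fin g) F).charpoly.map (algebraMap F K)).IsRoot x⁻¹ := by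
  set A := (M : Matrix (Fin g ⊕ Fin g) (Fin g ⊕ Fin g) F).map (algebraMap F K) with hA
  have hmem : A ∈ symplecticGroup (Fin g) K := SymplecticGroup.map_mem M.2 _
  rw [← Matrix.charpoly_map, ← Matrix.mem_spectrum_iff_isRoot_charpoly] at hx ⊢
  set A' : symplecticGroup (Fin g) K := ⟨A, hmem⟩
  let u : (Matrix (Fin g ⊕ Fin g) (Fin g ⊕ Fin g) K)ˣ := Units.map (symplecticGroup (Fin g) K).subtype (toUnits A')
  have hu : (u : Matrix (Fin g ⊕ Fin g) (Fin g ⊕ Fin g) K) = A := rfl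
  have hui : ((u⁻¹ : (Matrix (Fin g ⊕ Fin g) (Fin g ⊕ Fin g) K)ˣ) : Matrix (Fin g ⊕ Fin g) (Fin g ⊕ Fin g) K) = (-J (Fin g) K) * Aᵀ * J (Fin g) K := rfl
  have hx0 : x ≠ 0 := by
    rintro rfl
    exact spectrum.zero_notMem K u.isUnit hx
  have h1 : x⁻¹ ∈ spectrum K ((u⁻¹ : (Matrix (Fin g ⊕ Fin g) (Fin g ⊕ Fin g) K)ˣ) : Matrix (Fin g ⊕ Fin g) (Fin g ⊕ Fin g) K) := by
    have := (spectrum.inv_mem_iff (r := Units.mk0 x hx0) (a := u)).mp hx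
    simpa using this
  rw [hui] at h1
  rw [Matrix.mem_spectrum_iff_isRoot_charpoly] at h1 ⊢
  have h2 : ((-J (Fin g) K) * Aᵀ * J (Fin g) K).charpoly = A.charpoly := by
    rw [Matrix.charpoly_mul_comm, ← Matrix.mul_assoc, Matrix.mul_neg, Matrix.J_squared, neg_neg, Matrix.one_mul, Matrix.charpoly_transpose]
  rwa [h2] at h1

lemma exists_prim_eig {p : ℕ} [Fact p.Prime] {K : Type*} [Field K] [IsAlgClosed K] [Algebra (ZMod p) K]
    {m : Type*} [Fintype m] [DecidableEq m] (M : Matrix m m (ZMod p)) (l b : ℕ) (hl : l.Prime)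
    (hlp : l ≠ p) (h1 : M ^ l ^ (b + 1) = 1) (h2 : M ^ l ^ b ≠ 1) :
    ∃ x : K, IsPrimitiveRoot x (l ^ (b + 1)) ∧
      (M.charpoly.map (algebraMap (ZMod p) K)).IsRoot x := by
  have : Fact l.Prime := ⟨hl⟩
  have : CharP K p := charP_of_injective_algebraMap (algebraMap (ZMod p) K).injective p
  have : NeZero ((l ^ (b + 1) : ℕ) : K) := ⟨by
    rw [Ne, CharP.cast_eq_zero_iff K p]
    intro h
    exact hlp ((Nat.prime_dvd_prime_iff_eq Fact.out hl).mp (Nat.Prime.dvd_of_dvd_pow Fact.out h)).symm⟩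
  set A := M.map (algebraMap (ZMod p) K) with hA
  have hA' : A = (algebraMap (ZMod p) K).mapMatrix M := rfl
  have hinj : Function.Injective ((algebraMap (ZMod p) K).mapMatrix : Matrix m m (ZMod p) →+* Matrix m m K) :=
    Matrix.map_injective (algebraMap (ZMod p) K).injective
  have a1 : A ^ l ^ (b + 1) = 1 := by rw [hA', ← map_pow, h1, map_one]
  have a2 : A ^ l ^ b ≠ 1 := by
    rw [hA', ← map_pow, Ne, ← map_one ((algebraMap (ZMod p) K).mapMatrix : Matrix m m (ZMod p) →+* Matrix m m K)]
    exact fun h => h2 (hinj h)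
  have hprod := congrArg (aeval A) (cyclotomic_prime_pow_mul_X_pow_sub_one K l b)
  simp only [map_mul, map_sub, map_pow, aeval_X, map_one, a1, sub_self] at hprod
  have hnu : ¬ IsUnit (aeval A (cyclotomic (l ^ (b + 1)) K)) := by
    intro hu
    exact a2 (sub_eq_zero.mp ((hu.mul_right_eq_zero).mp hprod))
  rw [← spectrum.zero_mem_iff K, spectrum.map_polynomial_aeval_of_degree_pos] at hnu
  · obtain ⟨x, hx, hx0⟩ := hnu
    refine ⟨x, isRoot_cyclotomic_iff.mp hx0, ?_⟩
    rwa [← Matrix.charpoly_map, ← Matrix.mem_spectrum_iff_isRoot_charpoly]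
  · exact degree_cyclotomic_pos _ _ (pow_pos hl.pos _)

lemma pow_congr_zmod {K : Type*} [Field K] {N : ℕ} {x : K} (hx : IsPrimitiveRoot x N) {i j : ℕ}
    (hij : (i : ZMod N) = j) : x ^ i = x ^ j := by
  rw [ZMod.natCast_eq_natCast_iff] at hij
  exact pow_eq_pow_of_modEq hij hx.pow_eq_one

lemma pow_inv_zmod {K : Type*} [Field K] {N : ℕ} {x : K} (hx : IsPrimitiveRoot x N) {i j : ℕ}
    (hij : (i : ZMod N) = -j) : x ^ i = (x ^ j)⁻¹ := by
  have h0 : x ^ (i + j) = x ^ 0 :=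
    pow_congr_zmod hx (by rw [Nat.cast_add, hij, neg_add_cancel, Nat.cast_zero])
  rw [pow_add, pow_zero] at h0
  exact eq_inv_of_mul_eq_one_left h0

lemma order_bound {p : ℕ} [Fact p.Prime] (K : Type*) [Field K] [IsAlgClosed K]
    [Algebra (ZMod p) K] {g : ℕ} (M : symplecticGroup (Fin g) (ZMod p)) (l b : ℕ)
    (hl : l.Prime) (hlp : l ≠ p) (hM : orderOf M = l ^ (b + 1)) (a : (ZMod (l ^ (b + 1)))ˣ)
    (ha : ∀ u : (ZMod (l ^ (b + 1)))ˣ, ∃ k : ℕ, u = a ^ k ∨ u = -a ^ k)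
    (hap : (p : ZMod (l ^ (b + 1))) = a) : Nat.totient (l ^ (b + 1)) ≤ 2 * g := by
  classical
  have e1 : (M : Matrix (Fin g ⊕ Fin g) (Fin g ⊕ Fin g) (ZMod p)) ^ l ^ (b + 1) = 1 := by
    rw [← SubmonoidClass.coe_pow, ← hM, pow_orderOf_eq_one]; rfl
  have e2 : (M : Matrix (Fin g ⊕ Fin g) (Fin g ⊕ Fin g) (ZMod p)) ^ l ^ b ≠ 1 := by
    intro h
    have h' : M ^ l ^ b = 1 := Subtype.ext (by rw [SubmonoidClass.coe_pow, h]; rfl)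
    have := orderOf_dvd_of_pow_eq_one h'
    rw [hM, Nat.pow_dvd_pow_iff_le_right hl.one_lt] at this
    omega
  obtain ⟨x, hx, hroot⟩ := exists_prim_eig (K := K) (M : Matrix (Fin g ⊕ Fin g) (Fin g ⊕ Fin g) (ZMod p)) l b hl hlp e1 e2
  set P := (M : Matrix (Fin g ⊕ Fin g) (Fin g ⊕ Fin g) (ZMod p)).charpoly.map (algebraMap (ZMod p) K) with hP
  have hfrob : ∀ k : ℕ, P.IsRoot (x ^ p ^ k) := by
    intro k
    induction k with
    | zero => simpa using hroot
    | succ k ih => rw [pow_succ, pow_mul]; exact spectrum_frob _ _ ih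
  have hpowcongr : ∀ i j : ℕ, (i : ZMod (l ^ (b + 1))) = j → x ^ i = x ^ j :=
    fun i j => pow_congr_zmod hx
  have hinv : ∀ i j : ℕ, (i : ZMod (l ^ (b + 1))) = -j → x ^ i = (x ^ j)⁻¹ :=
    fun i j => pow_inv_zmod hx
  have hmono : P ≠ 0 := ((Matrix.charpoly_monic _).map _).ne_zero
  have hsub : primitiveRoots (l ^ (b + 1)) K ⊆ P.roots.toFinset := by
    intro y hy
    have : NeZero (l ^ (b + 1)) := ⟨(pow_pos hl.pos _).ne'⟩
    have hy := isPrimitiveRoot_of_mem_primitiveRoots hy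
    rw [Multiset.mem_toFinset, mem_roots hmono]
    obtain ⟨i, hi, hco, rfl⟩ := hx.isPrimitiveRoot_iff.mp hy
    obtain ⟨k, hk⟩ := ha (ZMod.unitOfCoprime i hco)
    rcases hk with hk | hk
    · have := congrArg Units.val hk
      rw [ZMod.coe_unitOfCoprime, Units.val_pow_eq_pow_val, ← hap] at this
      rw [hpowcongr i (p ^ k) (by rw [Nat.cast_pow]; exact this)]
      exact hfrob k
    · have := congrArg Units.val hk
      rw [ZMod.coe_unitOfCoprime, Units.val_neg, Units.val_pow_eq_pow_val, ← hap] at this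
      rw [hinv i (p ^ k) (by rw [Nat.cast_pow]; exact this)]
      exact spectrum_inv M _ (hfrob k)
  calc Nat.totient (l ^ (b + 1)) = (primitiveRoots (l ^ (b + 1)) K).card := (hx.card_primitiveRoots).symm
    _ ≤ P.roots.toFinset.card := Finset.card_le_card hsub
    _ ≤ P.roots.card := Multiset.toFinset_card_le _
    _ ≤ P.natDegree := card_roots' _
    _ ≤ 2 * g := by
      rw [hP, natDegree_map, Matrix.charpoly_natDegree_eq_dim]
      simp [two_mul]

end SpOrder
theorem dvd_bound (g : ℕ) (hg : 1 ≤ g) (n : ℕ) (hn : n ∈ AdmissibleForG g) (l b : ℕ)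
    (hl : l.Prime) (hd : l ^ (b + 1) ∣ n) : (l - 1) * l ^ b ≤ 2 * g := by
  obtain ⟨hpos, p₀, hp₀, hp₀2, H⟩ := hn
  have : NeZero (l ^ (b + 1)) := ⟨(pow_pos hl.pos _).ne'⟩
  obtain ⟨a, ha⟩ := SpOrder.exists_gen l (b + 1) hl
  obtain ⟨p, hp, hpp, hpa⟩ := Nat.forall_exists_prime_gt_and_eq_mod a.isUnit (2 + p₀ + l)
  obtain ⟨M, hM⟩ := H p hpp (by omega) (by omega)
  have : Fact p.Prime := ⟨hpp⟩
  obtain ⟨c, rfl⟩ := hd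
  have hc : c ≠ 0 := by rintro rfl; simp at hpos
  have hMc : orderOf (M ^ c) = l ^ (b + 1) := by
    rw [orderOf_pow_of_dvd hc ⟨_, by rw [hM, mul_comm]⟩, hM]
    exact Nat.mul_div_cancel _ (Nat.pos_of_ne_zero hc)
  have := SpOrder.order_bound (AlgebraicClosure (ZMod p)) (M ^ c) l b hl (by omega) hMc a ha hpa
  rw [Nat.totient_prime_pow_succ hl, mul_comm] at this
  exact this

theorem mem_admissible (g : ℕ) (hg : 1 ≤ g) (l k : ℕ) (hl : l.Prime)
    (hle : (l - 1) * l ^ k ≤ 2 * g) : l ^ (k + 1) ∈ AdmissibleForG g := by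
  have key : ∀ p : ℕ, p.Prime → p ≠ 2 → p ≠ l →
      ∃ M : Matrix.symplecticGroup (Fin g) (ZMod p), orderOf M = l ^ (k + 1) := by
    intro p hp hp2 hpl
    have : Fact p.Prime := ⟨hp⟩
    have : NeZero ((l ^ (k + 1) : ℕ) : AlgebraicClosure (ZMod p)) := ⟨by
      rw [Ne, CharP.cast_eq_zero_iff _ p]
      intro h
      exact hpl ((Nat.prime_dvd_prime_iff_eq hp hl).mp (hp.dvd_of_dvd_pow h))⟩
    obtain ⟨z, hz⟩ := IsAlgClosed.exists_root
      (Polynomial.cyclotomic (l ^ (k + 1)) (AlgebraicClosure (ZMod p)))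
      (Polynomial.degree_cyclotomic_pos _ _ (pow_pos hl.pos _)).ne'
    rw [Polynomial.isRoot_cyclotomic_iff] at hz
    have hz0 : z ≠ 0 := hz.ne_zero (pow_pos hl.pos _).ne'
    have h2 : (2 : ZMod p) ≠ 0 := by
      intro h
      have h' : ((2 : ℕ) : ZMod p) = 0 := by exact_mod_cast h
      rw [ZMod.natCast_eq_zero_iff] at h'
      exact hp2 ((Nat.prime_dvd_prime_iff_eq hp Nat.prime_two).mp h')
    obtain ⟨h, h1, hhg, hmem⟩ := SpOrder.base_case (F := ZMod p) h2 z hl hz hg hle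
    obtain ⟨S, hS, hsum⟩ := SpOrder.exists_S z hg (SpOrder.tt_mem_LL z hz0 h1 hmem hhg)
    exact SpOrder.exists_order hg z _ (pow_pos hl.pos _) hz S hS hsum
  refine ⟨pow_pos hl.pos _, ?_⟩
  by_cases h2 : l = 2
  · refine ⟨3, Nat.prime_three, by norm_num, fun p hp hp2 _ => key p hp hp2 (by omega)⟩
  · exact ⟨l, hl, h2, key⟩

theorem stmt11 (g : ℕ) (hg : 1 ≤ g) :
    ∃ hfin : (AdmissibleForG g).Finite,
      hfin.toFinset.lcm id =
        ∏ᶠ n ∈ {n : ℕ | ∃ p k : ℕ, p.Prime ∧ 1 ≤ k ∧ n = p ^ k ∧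
            (p - 1) * p ^ (k - 1) ≤ 2 * g ∧ 2 * g < (p - 1) * p ^ k}, n := by
  set T := {n : ℕ | ∃ p k : ℕ, p.Prime ∧ 1 ≤ k ∧ n = p ^ k ∧
            (p - 1) * p ^ (k - 1) ≤ 2 * g ∧ 2 * g < (p - 1) * p ^ k} with hT
  have hTfin : T.Finite := by
    refine (Set.finite_Iic (4 * g)).subset ?_
    rintro n ⟨p, k, hp, hk, rfl, h1, -⟩
    obtain ⟨k, rfl⟩ : ∃ j, k = j + 1 := ⟨k - 1, by omega⟩
    rw [Nat.add_sub_cancel] at h1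
    have hp2 : p ≤ 2 * (p - 1) := by have := hp.two_le; omega
    calc p ^ (k + 1) = p ^ k * p := pow_succ _ _
      _ ≤ p ^ k * (2 * (p - 1)) := Nat.mul_le_mul_left _ hp2
      _ = 2 * ((p - 1) * p ^ k) := by ring
      _ ≤ 4 * g := by omega
  rw [finprod_mem_eq_finite_toFinset_prod _ hTfin]
  have hT0 : ∏ n ∈ hTfin.toFinset, n ≠ 0 := by
    rw [Finset.prod_ne_zero_iff]
    intro n hn
    obtain ⟨p, k, hp, hk, rfl, -⟩ := hTfin.mem_toFinset.mp hn
    exact (pow_pos hp.pos _).ne'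
  have hdvd : ∀ n ∈ AdmissibleForG g, n ∣ ∏ n ∈ hTfin.toFinset, n := by
    intro n hn
    rw [Nat.dvd_iff_prime_pow_dvd_dvd]
    intro l b hl hd
    rcases b with _ | b
    · simp
    have hb := dvd_bound g hg n hn l b hl hd
    -- the maximal exponent
    have hex : ∃ k, 2 * g < (l - 1) * l ^ k := by
      obtain ⟨k, hk⟩ := pow_unbounded_of_one_lt (2 * g) hl.one_lt
      have h1 : 1 ≤ l - 1 := by have := hl.two_le; omega
      exact ⟨k, lt_of_lt_of_le hk (Nat.le_mul_of_pos_left _ h1)⟩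
    classical
    have hbk : b < Nat.find hex := by
      by_contra hcon
      have h1 := Nat.find_spec hex
      have h2 : (l - 1) * l ^ Nat.find hex ≤ (l - 1) * l ^ b :=
        Nat.mul_le_mul_left _ (Nat.pow_le_pow_right hl.pos (by omega))
      omega
    have hmem : l ^ Nat.find hex ∈ T := by
      refine ⟨l, Nat.find hex, hl, by omega, rfl, ?_, Nat.find_spec hex⟩
      have := Nat.find_min hex (m := Nat.find hex - 1) (by omega)
      omega
    exact (pow_dvd_pow l (by omega)).trans (Finset.dvd_prod_of_mem (fun n => n) (hTfin.mem_toFinset.mpr hmem))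
  have hfin : (AdmissibleForG g).Finite :=
    (Set.finite_Iic _).subset fun n hn => Nat.le_of_dvd (Nat.pos_of_ne_zero hT0) (hdvd n hn)
  refine ⟨hfin, Nat.dvd_antisymm ?_ ?_⟩
  · exact Finset.lcm_dvd fun n hn => hdvd n (hfin.mem_toFinset.mp hn)
  · apply Finset.prod_dvd_of_isRelPrime
    · intro m hm n hn hne
      obtain ⟨p, k, hp, hk, rfl, h1, h2⟩ := hTfin.mem_toFinset.mp hm
      obtain ⟨q, j, hq, hj, rfl, h3, h4⟩ := hTfin.mem_toFinset.mp hn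
      have hpq : p ≠ q := by
        rintro rfl
        apply hne
        have aux : ∀ a b : ℕ, (p - 1) * p ^ (a - 1) < (p - 1) * p ^ b → a - 1 < b := by
          intro a b h
          by_contra hcon
          exact absurd h (not_lt.mpr (Nat.mul_le_mul_left _ (Nat.pow_le_pow_right hp.pos (by omega))))
        have a1 := aux k j (by omega)
        have a2 := aux j k (by omega)
        rw [show k = j by omega]
      exact Nat.coprime_iff_isRelPrime.mp (Nat.coprime_pow_primes _ _ hp hq hpq)
    · intro n hn
      obtain ⟨p, k, hp, hk, rfl, h1, h2⟩ := hTfin.mem_toFinset.mp hn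
      obtain ⟨k, rfl⟩ : ∃ j, k = j + 1 := ⟨k - 1, by omega⟩
      exact Finset.dvd_lcm (f := id) (hfin.mem_toFinset.mpr (mem_admissible g hg p k hp h1))
end
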